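/- arXiv:cs/0509032 — 4 statements merged into one kernel-verified Lean document; each statement's English description precedes it below -/
import Mathlib

section
/- Let k ≥ 2 be an integer and let α > 1/k, r > 0 and 0 < p ≤ (k-1)/k be real constants. For a random instance P drawn from RB(k,n,α,r,p), the probability that P is satisfiable tends, as n → ∞, to 1 if r < r_cr and to 0 if r > r_cr, where r_cr = -α/ln(1-p). -/
namespace RB

/-- A (raw) constraint over `n` variables with common domain `Fin d`:
a scope (set of variables) together with a set of forbidden tuples,
i.e. forbidden functions from the scope to the domain. -/
abbrev Constraint (n d : ℕ) : Type := Σ s : Finset (Fin n), Finset (↥s → Fin d)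

/-- A constraint of model RB: scope of exactly `k` variables and exactly `q` forbidden tuples. -/
abbrev ValidConstraint (k n d q : ℕ) : Type :=
  {c : Constraint n d // c.1.card = k ∧ c.2.card = q}

/-- An instance of model RB: a sequence of `m` constraints (chosen with repetition). -/
abbrev Instance (k n d q m : ℕ) : Type := Fin m → ValidConstraint k n d q

/-- An assignment satisfies a constraint iff the tuple it induces on the scope is not forbidden. -/
def satisfies {n d : ℕ} (a : Fin n → Fin d) (c : Constraint n d) : Prop :=
  (fun i : ↥c.1 => a i.1) ∉ c.2

/-- An assignment satisfies an instance iff it satisfies all its constraints. -/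
def satInstance {k n d q m : ℕ} (a : Fin n → Fin d) (P : Instance k n d q m) : Prop :=
  ∀ i : Fin m, satisfies a (P i).1

open scoped Classical in
/-- The probability (uniform over instances, i.e. constraints chosen independently,
uniformly and with repetition) that a random instance is satisfiable. -/
noncomputable def prSat (k n d q m : ℕ) : ℝ :=
  ((Finset.univ.filter fun P : Instance k n d q m =>
      ∃ a : Fin n → Fin d, satInstance a P).card : ℝ)
    / (Fintype.card (Instance k n d q m))

/-- Domain size `d = ⌈n^α⌉`. -/
noncomputable def dOf (α : ℝ) (n : ℕ) : ℕ := ⌈(n : ℝ) ^ α⌉₊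

/-- Number of constraints `m = ⌈r · n · ln n⌉`. -/
noncomputable def mOf (r : ℝ) (n : ℕ) : ℕ := ⌈r * n * Real.log n⌉₊

/-- Number of forbidden tuples `q = ⌈p · d^k⌉`. -/
noncomputable def qOf (p : ℝ) (k d : ℕ) : ℕ := ⌈p * (d : ℝ) ^ k⌉₊

/-- Probability that a random instance of `RB(k,n,α,r,p)` is satisfiable. -/
noncomputable def prSatRB (k : ℕ) (α r p : ℝ) (n : ℕ) : ℝ :=
  prSat k n (dOf α n) (qOf p k (dOf α n)) (mOf r n)

end RB

open Filter Topology

/-! The expected number of satisfying assignments is `d ^ n * (1 - p) ^ m`, up to rounding, which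
tends to `0` above the threshold. Below it, the second moment method gives
`1 ≤ ℙ(satisfiable) * S`, where `S = 𝔼[(1 + p / (1 - p) * (s / n) ^ k) ^ m]` and the overlap `s`
of two random assignments is binomial with parameters `n` and `1 / d`. Overlaps `s ≤ n ^ (1 - β)`,
where `1 / k < β < α`, contribute at most `1 + o(1)` to `S`. For fixed `x = s / n > 0` the
corresponding term is `exp (-(α x - r log (1 + p / (1 - p) * x ^ k) + o(1)) n log n)`, and for
small `x ≥ n ^ (-β)` the entropy factor `choose n s` is absorbed by the gap `α - β`. So these
terms are dominated by a vanishing geometric series as soon as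
`r log (1 + p / (1 - p) * x ^ k) < α x` on `(0, 1]`. If `p ≤ (k - 1) / k`, then by Bernoulli's
inequality it suffices to check `x = 1`, and there the condition is `r < -α / log (1 - p)`.
-/

namespace RB

open Finset
open scoped BigOperators

section UniformProbability

variable {V : Type*} [Fintype V]

open scoped Classical in
/-- The probability of the event `Q` under the uniform distribution on the finite type `V`
(zero if `V` is empty). -/
noncomputable def prob (Q : V → Prop) : ℝ := (univ.filter Q).dens

lemma prob_eq_card_div_card (Q : V → Prop) [DecidablePred Q] :
    prob Q = #{v | Q v} / Fintype.card V := by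
  rw [prob, nnratCast_dens]
  congr!

lemma prob_eq_expect (Q : V → Prop) [DecidablePred Q] : prob Q = 𝔼 v, if Q v then 1 else 0 := by
  rw [prob_eq_card_div_card, Fintype.expect_eq_sum_div_card, sum_boole]

lemma prob_nonneg (Q : V → Prop) : 0 ≤ prob Q := by
  rw [prob]; positivity

lemma prob_le_one (Q : V → Prop) : prob Q ≤ 1 := by
  rw [prob]; exact_mod_cast dens_le_one

lemma prob_forall_apply {ι : Type*} [Fintype ι] [DecidableEq ι] (Q : V → Prop) :
    prob (fun P : ι → V => ∀ i, Q (P i)) = prob Q ^ Fintype.card ι := by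
  classical
  have hfilter : ({P : ι → V | ∀ i, Q (P i)} : Finset (ι → V)) =
      Fintype.piFinset fun _ => {v | Q v} := by
    ext; simp
  simp only [prob_eq_card_div_card, hfilter, Fintype.card_piFinset, prod_const, card_univ,
    Fintype.card_fun, Nat.cast_pow, div_pow]

variable {A : Type*} [Fintype A]

lemma prob_exists_le_sum (E : A → V → Prop) : prob (fun v => ∃ a, E a v) ≤ ∑ a, prob (E a) := by
  classical
  have hunion : ({v | ∃ a, E a v} : Finset V) = univ.biUnion fun a => {v | E a v} := by
    ext; simp
  simp only [prob_eq_card_div_card, hunion, ← sum_div]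
  gcongr
  exact_mod_cast card_biUnion_le

lemma sq_expect_mul_le (f g : V → ℝ) :
    (𝔼 v, f v * g v) ^ 2 ≤ (𝔼 v, f v ^ 2) * 𝔼 v, g v ^ 2 := by
  simp only [Fintype.expect_eq_sum_div_card, div_pow, div_mul_div_comm, ← sq]
  gcongr
  exact sum_mul_sq_le_sq_mul_sq _ _ _

/-- Cauchy-Schwarz applied to the number `N` of events that occur and the indicator of `N > 0`. -/
lemma sq_sum_prob_le_prob_exists_mul (E : A → V → Prop) :
    (∑ a, prob (E a)) ^ 2 ≤
      prob (fun v => ∃ a, E a v) * ∑ a, ∑ b, prob (fun v => E a v ∧ E b v) := by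
  classical
  let N : V → ℝ := fun v => ∑ a, if E a v then 1 else 0
  let G : V → ℝ := fun v => if ∃ a, E a v then 1 else 0
  have hGN v : G v * N v = N v := by
    by_cases hv : ∃ a, E a v
    · simp [G, hv]
    · have hN : N v = 0 := sum_eq_zero fun a _ => if_neg fun ha => hv ⟨a, ha⟩
      simp [hN]
  have hfirst : ∑ a, prob (E a) = 𝔼 v, G v * N v := by
    simp only [hGN, N, prob_eq_expect, expect_sum_comm]
  have hsecond : ∑ a, ∑ b, prob (fun v => E a v ∧ E b v) = 𝔼 v, N v ^ 2 := by
    simp only [N, prob_eq_expect, sq, sum_mul_sum, expect_sum_comm, ite_zero_mul_ite_zero, one_mul]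
  have hexists : prob (fun v => ∃ a, E a v) = 𝔼 v, G v ^ 2 := by
    simp only [G, prob_eq_expect, ite_pow, one_pow, ne_eq, OfNat.ofNat_ne_zero, not_false_eq_true,
      zero_pow]
  rw [hfirst, hsecond, hexists]
  exact sq_expect_mul_le G N

end UniformProbability

section BinomialMean

/-- The expectation of `f X` for a binomially distributed `X` with `n` trials and success
probability `p`. -/
noncomputable def binomialMean (n : ℕ) (p : ℝ) (f : ℕ → ℝ) : ℝ :=
  ∑ s ∈ range (n + 1), p ^ s * (1 - p) ^ (n - s) * n.choose s * f s

lemma sum_binomial_weights (n : ℕ) (p : ℝ) :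
    ∑ s ∈ range (n + 1), p ^ s * (1 - p) ^ (n - s) * n.choose s = 1 := by
  rw [← add_pow, add_sub_cancel, one_pow]

lemma one_le_binomialMean {n : ℕ} {p : ℝ} (hp₀ : 0 ≤ p) (hp₁ : p ≤ 1) {f : ℕ → ℝ}
    (hf : ∀ s ≤ n, 1 ≤ f s) : 1 ≤ binomialMean n p f := by
  rw [← sum_binomial_weights n p]
  refine sum_le_sum fun s hs => le_mul_of_one_le_right ?_ (hf s (mem_range_succ_iff.1 hs))
  have := sub_nonneg.2 hp₁
  positivity

lemma binomialMean_le_add_geometric {n : ℕ} {p B ρ : ℝ} (hp₀ : 0 ≤ p) (hp₁ : p ≤ 1) (hB : 0 ≤ B)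
    (hρ₀ : 0 ≤ ρ) (hρ₁ : ρ < 1) {f : ℕ → ℝ} (hf₀ : ∀ s, 0 ≤ f s)
    (hf : ∀ s ≤ n, f s ≤ B ∨ s ≠ 0 ∧ n.choose s * p ^ s * f s ≤ ρ ^ s) :
    binomialMean n p f ≤ B + ρ / (1 - ρ) := by
  classical
  have hq₀ : 0 ≤ 1 - p := sub_nonneg.2 hp₁
  have hq₁ (s : ℕ) : (1 - p) ^ s ≤ 1 := pow_le_one₀ hq₀ (sub_le_self 1 hp₀)
  rw [binomialMean, ← sum_filter_add_sum_filter_not _ (fun s => f s ≤ B)]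
  gcongr ?_ + ?_
  · calc
      _ ≤ ∑ s ∈ range (n + 1) with f s ≤ B, p ^ s * (1 - p) ^ (n - s) * n.choose s * B := by
        gcongr with s hs
        exact (mem_filter.1 hs).2
      _ ≤ ∑ s ∈ range (n + 1), p ^ s * (1 - p) ^ (n - s) * n.choose s * B :=
        sum_le_sum_of_subset_of_nonneg (filter_subset _ _) fun s _ _ => by positivity
      _ = B := by rw [← sum_mul, sum_binomial_weights, one_mul]
  · have htail : ∀ s ∈ (range (n + 1)).filter fun s => ¬ f s ≤ B,
        s ∈ Ico 1 (n + 1) ∧ n.choose s * p ^ s * f s ≤ ρ ^ s := by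
      intro s hs
      obtain ⟨hsn, hsB⟩ := mem_filter.1 hs
      obtain ⟨hs₀, hsρ⟩ := (hf s (mem_range_succ_iff.1 hsn)).resolve_left hsB
      exact ⟨mem_Ico.2 ⟨Nat.one_le_iff_ne_zero.2 hs₀, mem_range.1 hsn⟩, hsρ⟩
    calc
      _ ≤ ∑ s ∈ range (n + 1) with ¬ f s ≤ B, ρ ^ s := by
        refine sum_le_sum fun s hs => le_trans ?_ (htail s hs).2
        have := mul_le_mul_of_nonneg_left (hq₁ (n - s))
          (mul_nonneg (by positivity : (0 : ℝ) ≤ n.choose s * p ^ s) (hf₀ s))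
        linarith
      _ ≤ ∑ s ∈ Ico 1 (n + 1), ρ ^ s :=
        sum_le_sum_of_subset_of_nonneg (fun s hs => (htail s hs).1) fun s _ _ => by positivity
      _ ≤ ρ / (1 - ρ) := by simpa using geom_sum_Ico_le_of_lt_one hρ₀ hρ₁ (m := 1) (n := n + 1)

end BinomialMean

section Choose

lemma choose_sub_one_div_choose {D q : ℕ} (hD : 0 < D) (hq : q ≤ D) :
    ((D - 1).choose q : ℝ) / D.choose q = 1 - (q : ℝ) / D := by
  obtain ⟨E, rfl⟩ := Nat.exists_eq_add_one.2 hD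
  have hpos : (0 : ℝ) < (E + 1).choose q := mod_cast Nat.choose_pos hq
  have hrec : (E.choose q : ℝ) * (E + 1 : ℕ) = (E + 1).choose q * ((E + 1 : ℕ) - q) := by
    rw [← Nat.cast_sub hq]
    exact_mod_cast Nat.choose_mul_succ_eq E q
  have hE : ((E + 1 : ℕ) : ℝ) ≠ 0 := by positivity
  rw [Nat.add_sub_cancel]
  field_simp
  exact hrec

lemma choose_sub_two_div_choose_le {D q : ℕ} (hq : q < D) :
    ((D - 2).choose q : ℝ) / D.choose q ≤ (1 - (q : ℝ) / D) ^ 2 := by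
  rcases Nat.lt_or_ge (D - 2) q with hlt | hle
  · rw [Nat.choose_eq_zero_of_lt hlt, Nat.cast_zero, zero_div]
    positivity
  rcases Nat.eq_zero_or_pos q with rfl | hq₀
  · simp
  have hD₁ : (0 : ℝ) < (D - 1 : ℕ) := mod_cast (by omega : 0 < D - 1)
  have hpos : ((D - 1).choose q : ℝ) ≠ 0 := mod_cast (Nat.choose_pos (by omega)).ne'
  have hnonneg : (0 : ℝ) ≤ 1 - (q : ℝ) / D :=
    sub_nonneg.2 (div_le_one_of_le₀ (mod_cast hq.le) (by positivity))
  have hle' : (q : ℝ) / D ≤ q / (D - 1 : ℕ) := by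
    gcongr
    exact Nat.sub_le D 1
  calc ((D - 2).choose q : ℝ) / D.choose q
      = ((D - 1 - 1).choose q / (D - 1).choose q) * ((D - 1).choose q / D.choose q) := by
        rw [div_mul_div_cancel₀ hpos, Nat.sub_sub]
    _ = (1 - q / (D - 1 : ℕ)) * (1 - q / D) := by
        rw [choose_sub_one_div_choose (by omega) (by omega),
          choose_sub_one_div_choose (by omega) hq.le]
    _ ≤ (1 - q / D) * (1 - q / D) := by gcongr
    _ = (1 - q / D) ^ 2 := (sq _).symm

lemma descFactorial_mul_pow_le {s n : ℕ} (hsn : s ≤ n) (k : ℕ) :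
    s.descFactorial k * n ^ k ≤ n.descFactorial k * s ^ k := by
  induction k with
  | zero => simp
  | succ k ih =>
    have hfactor : (s - k) * n ≤ (n - k) * s := by
      rw [Nat.sub_mul, Nat.sub_mul, mul_comm n s]
      gcongr
    calc (s - k) * s.descFactorial k * n ^ (k + 1)
        = (s - k) * n * (s.descFactorial k * n ^ k) := by ring
      _ ≤ (n - k) * s * (n.descFactorial k * s ^ k) := by gcongr
      _ = (n - k) * n.descFactorial k * s ^ (k + 1) := by ring

lemma choose_div_choose_le_pow {s n : ℕ} (hsn : s ≤ n) (k : ℕ) :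
    (s.choose k : ℝ) / n.choose k ≤ ((s : ℝ) / n) ^ k := by
  rcases Nat.lt_or_ge n k with hnk | hkn
  · rw [Nat.choose_eq_zero_of_lt hnk, Nat.cast_zero, div_zero]
    positivity
  have hnk : 0 < n ^ k := by
    rcases Nat.eq_zero_or_pos k with rfl | hk
    · simp
    · exact pow_pos (hk.trans_le hkn) k
  have hmul : s.choose k * n ^ k ≤ n.choose k * s ^ k := by
    have h := descFactorial_mul_pow_le hsn k
    simp only [Nat.descFactorial_eq_factorial_mul_choose, mul_assoc] at h
    exact Nat.le_of_mul_le_mul_left h k.factorial_pos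
  rw [div_pow, div_le_div_iff₀ (mod_cast Nat.choose_pos hkn) (mod_cast hnk), mul_comm (_ ^ k)]
  exact_mod_cast hmul

lemma expect_subset_le_pow {ι : Type*} [Fintype ι] [DecidableEq ι] (S : Finset ι) (k : ℕ) :
    𝔼 s ∈ powersetCard k univ, (if s ⊆ S then (1 : ℝ) else 0) ≤ (#S / Fintype.card ι) ^ k := by
  have hsub : ({s ∈ powersetCard k univ | s ⊆ S} : Finset (Finset ι)) = powersetCard k S := by
    ext s
    simp [mem_powersetCard, and_comm]
  rw [expect_eq_sum_div_card, sum_boole, hsub, card_powersetCard, card_powersetCard, card_univ]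
  exact choose_div_choose_le_pow (card_le_univ S) k

lemma choose_le_exp_one_mul_div_pow (n s : ℕ) :
    (n.choose s : ℝ) ≤ (Real.exp 1 * (n / s)) ^ s := by
  rcases Nat.eq_zero_or_pos s with rfl | hs
  · simp
  calc (n.choose s : ℝ) ≤ (n : ℝ) ^ s / s.factorial := Nat.choose_le_pow_div s n
    _ = (s : ℝ) ^ s / s.factorial * (n / s : ℝ) ^ s := by rw [div_pow]; field_simp
    _ ≤ Real.exp s * (n / s : ℝ) ^ s := by
        gcongr
        exact Real.pow_div_factorial_le_exp s (by positivity) s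
    _ = (Real.exp 1 * (n / s)) ^ s := by rw [mul_pow, ← Real.exp_nat_mul, mul_one]

end Choose

section Agreement

variable {ι κ : Type*} [Fintype ι] [DecidableEq κ]

/-- The set of variables on which the two assignments `a` and `b` take the same value. -/
def agreementSet (a b : ι → κ) : Finset ι := {i | a i = b i}

lemma mem_agreementSet {a b : ι → κ} {i : ι} : i ∈ agreementSet a b ↔ a i = b i := by
  simp [agreementSet]

lemma subset_agreementSet_iff {a b : ι → κ} {s : Finset ι} :
    s ⊆ agreementSet a b ↔ s.restrict a = s.restrict b := by
  simp [subset_iff, mem_agreementSet, funext_iff]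

variable [DecidableEq ι] [Fintype κ]

lemma card_filter_agreementSet_eq (a : ι → κ) (S : Finset ι) :
    #{b | agreementSet a b = S} = (Fintype.card κ - 1) ^ (Fintype.card ι - #S) := by
  have hbox : ({b | agreementSet a b = S} : Finset (ι → κ)) =
      Fintype.piFinset fun i => if i ∈ S then {a i} else {a i}ᶜ := by
    ext b
    simp only [mem_filter_univ, Fintype.mem_piFinset, Finset.ext_iff, mem_agreementSet]
    refine forall_congr' fun i => ?_
    by_cases hi : i ∈ S <;> simp [hi, eq_comm]
  have hside (i : ι) : #(if i ∈ S then {a i} else {a i}ᶜ) =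
      if i ∈ S then 1 else Fintype.card κ - 1 := by
    split_ifs <;> simp [card_compl]
  have hcompl : ({i | i ∉ S} : Finset ι) = Sᶜ := by ext; simp
  simp only [hbox, Fintype.card_piFinset, hside, prod_ite, prod_const_one, one_mul, prod_const,
    hcompl, card_compl]

/-- If `b` is uniformly random, then `#(agreementSet a b)` is binomially distributed. -/
lemma sum_card_agreementSet [Nonempty κ] (a : ι → κ) (f : ℕ → ℝ) :
    ∑ b, f #(agreementSet a b) =
      (Fintype.card κ : ℝ) ^ Fintype.card ι *
        binomialMean (Fintype.card ι) (1 / Fintype.card κ) f := by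
  have hd : (Fintype.card κ : ℝ) ≠ 0 := mod_cast Fintype.card_ne_zero
  have hweight {s : ℕ} (hs : s ≤ Fintype.card ι) :
      ((Fintype.card κ - 1 : ℕ) : ℝ) ^ (Fintype.card ι - s) =
        (Fintype.card κ : ℝ) ^ Fintype.card ι *
        ((1 / Fintype.card κ) ^ s * (1 - 1 / Fintype.card κ) ^ (Fintype.card ι - s)) := by
    rw [Nat.cast_pred Fintype.card_pos, ← Nat.add_sub_of_le hs, Nat.add_sub_cancel_left, pow_add,
      mul_mul_mul_comm, ← mul_pow, ← mul_pow, mul_one_div_cancel hd, one_pow, one_mul, mul_sub,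
      mul_one, mul_one_div_cancel hd]
  calc ∑ b, f #(agreementSet a b)
      = ∑ S ∈ (univ : Finset ι).powerset, ∑ b with agreementSet a b = S, f #S := by
        rw [← sum_fiberwise_of_maps_to (t := univ.powerset) (g := agreementSet a) (by simp)]
        refine sum_congr rfl fun S _ => sum_congr rfl fun b hb => ?_
        rw [(mem_filter.1 hb).2]
    _ = ∑ S ∈ (univ : Finset ι).powerset,
          ((Fintype.card κ - 1 : ℕ) : ℝ) ^ (Fintype.card ι - #S) * f #S := by
        simp only [sum_const, card_filter_agreementSet_eq, nsmul_eq_mul, Nat.cast_pow]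
    _ = _ := by
        rw [sum_powerset_apply_card
          fun s => ((Fintype.card κ - 1 : ℕ) : ℝ) ^ (Fintype.card ι - s) * f s, binomialMean,
          card_univ, mul_sum]
        refine sum_congr rfl fun s hs => ?_
        rw [hweight (mem_range_succ_iff.1 hs), nsmul_eq_mul]
        ring

end Agreement

section Constraints

variable {k n d q m : ℕ}

lemma card_filter_powersetCard_disjoint {T : Type*} [Fintype T] [DecidableEq T] (A : Finset T)
    (q : ℕ) : #{F ∈ powersetCard q univ | Disjoint A F} = (Fintype.card T - #A).choose q := by
  rw [← card_compl, ← card_powersetCard]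
  congr 1
  ext F
  simp only [mem_filter, mem_powersetCard, subset_univ, true_and, subset_compl_iff_disjoint_left,
    and_comm]

lemma card_filter_validConstraint (Q : Constraint n d → Prop) [DecidablePred Q] :
    #{c : ValidConstraint k n d q | Q c.1} =
      ∑ s ∈ powersetCard k univ, #{F ∈ powersetCard q (univ : Finset (↥s → Fin d)) | Q ⟨s, F⟩} := by
  rw [← card_sigma]
  refine card_bij (fun c _ => c.1) ?_ (fun _ _ _ _ => Subtype.ext) ?_
  · rintro ⟨⟨s, F⟩, hs, hF⟩ hc
    simp_all
  · rintro ⟨s, F⟩ h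
    obtain ⟨hs, hF, hQ⟩ : #s = k ∧ #F = q ∧ Q ⟨s, F⟩ := by simpa using h
    exact ⟨⟨⟨s, F⟩, hs, hF⟩, by simpa using hQ, rfl⟩

variable (k n d q) in
lemma card_validConstraint :
    Fintype.card (ValidConstraint k n d q) = n.choose k * (d ^ k).choose q := by
  rw [← card_univ, ← filter_true univ, card_filter_validConstraint fun _ => True]
  calc _ = ∑ _s ∈ powersetCard k (univ : Finset (Fin n)), (d ^ k).choose q :=
        sum_congr rfl fun s hs => by simp [(mem_powersetCard.1 hs).2]
    _ = n.choose k * (d ^ k).choose q := by simp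

/-- Conditioned on the scope `s`, the forbidden set has to miss the tuples that the assignments in
`A` induce on `s`. -/
lemma prob_forall_mem_satisfies (A : Finset (Fin n → Fin d)) :
    prob (fun c : ValidConstraint k n d q => ∀ a ∈ A, satisfies a c.1) =
      𝔼 s ∈ powersetCard k univ,
        ((d ^ k - #(A.image s.restrict)).choose q : ℝ) / (d ^ k).choose q := by
  classical
  have hscope : ∀ s ∈ powersetCard k (univ : Finset (Fin n)),
      #{F ∈ powersetCard q (univ : Finset (↥s → Fin d)) | ∀ a ∈ A, satisfies a ⟨s, F⟩} =
        (d ^ k - #(A.image s.restrict)).choose q := by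
    intro s hs
    have htuples : Fintype.card (↥s → Fin d) = d ^ k := by simp [(mem_powersetCard.1 hs).2]
    rw [← htuples, ← card_filter_powersetCard_disjoint]
    congr 1 with F
    simp only [mem_filter, disjoint_left, forall_mem_image]
    rfl
  rw [prob_eq_card_div_card, card_filter_validConstraint fun c => ∀ a ∈ A, satisfies a c,
    sum_congr rfl hscope, card_validConstraint, expect_eq_sum_div_card, card_powersetCard,
    card_univ, Fintype.card_fin, ← sum_div, div_div, mul_comm]
  push_cast
  rfl

lemma prob_satisfies (hkn : k ≤ n) (hd : 0 < d) (hq : q ≤ d ^ k) (a : Fin n → Fin d) :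
    prob (fun c : ValidConstraint k n d q => satisfies a c.1) = 1 - (q : ℝ) / (d ^ k : ℕ) := by
  have hne : (powersetCard k (univ : Finset (Fin n))).Nonempty :=
    powersetCard_nonempty.2 (by simpa using hkn)
  simpa [choose_sub_one_div_choose (pow_pos hd k) hq, expect_const hne] using
    prob_forall_mem_satisfies (k := k) (q := q) {a}

lemma choose_sub_card_image_pair_div_choose_le (hq : q < d ^ k) (a b : Fin n → Fin d)
    (s : Finset (Fin n)) {p : ℝ} (hp : p = (q : ℝ) / (d ^ k : ℕ)) :
    ((d ^ k - #(({a, b} : Finset _).image s.restrict)).choose q : ℝ) / (d ^ k).choose q ≤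
      (1 - p) ^ 2 + p * (1 - p) * if s ⊆ agreementSet a b then 1 else 0 := by
  rw [image_insert, image_singleton]
  by_cases hs : s ⊆ agreementSet a b
  · rw [if_pos hs, subset_agreementSet_iff.1 hs, pair_eq_singleton, card_singleton,
      choose_sub_one_div_choose (by omega) hq.le, ← hp]
    linarith [sq (1 - p)]
  · rw [if_neg hs, card_pair (mt subset_agreementSet_iff.2 hs), mul_zero, add_zero, hp]
    exact choose_sub_two_div_choose_le hq

lemma prob_satisfies_and_le (hkn : k ≤ n) (hq : q < d ^ k) (a b : Fin n → Fin d) {p : ℝ}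
    (hp : p = (q : ℝ) / (d ^ k : ℕ)) :
    prob (fun c : ValidConstraint k n d q => satisfies a c.1 ∧ satisfies b c.1) ≤
      (1 - p) ^ 2 * (1 + p / (1 - p) * (#(agreementSet a b) / n) ^ k) := by
  have hne : (powersetCard k (univ : Finset (Fin n))).Nonempty :=
    powersetCard_nonempty.2 (by simpa using hkn)
  have hp₀ : 0 ≤ p := hp ▸ by positivity
  have hp₁ : 0 < 1 - p := by
    rw [hp, sub_pos, div_lt_one (mod_cast (Nat.zero_le q).trans_lt hq)]
    exact_mod_cast hq
  calc prob (fun c : ValidConstraint k n d q => satisfies a c.1 ∧ satisfies b c.1)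
      ≤ 𝔼 s ∈ powersetCard k univ,
          ((1 - p) ^ 2 + p * (1 - p) * if s ⊆ agreementSet a b then 1 else 0) := by
        simpa using (prob_forall_mem_satisfies (k := k) (q := q) {a, b}).le.trans
          (expect_le_expect fun s _ => choose_sub_card_image_pair_div_choose_le hq a b s hp)
    _ ≤ (1 - p) ^ 2 + p * (1 - p) * (#(agreementSet a b) / n) ^ k := by
        rw [expect_add_distrib, expect_const hne, ← mul_expect]
        gcongr
        simpa using expect_subset_le_pow (agreementSet a b) k
    _ = (1 - p) ^ 2 * (1 + p / (1 - p) * (#(agreementSet a b) / n) ^ k) := by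
        field_simp

variable (k n d q m) in
lemma prSat_eq_prob :
    prSat k n d q m = prob fun P : Instance k n d q m => ∃ a : Fin n → Fin d, satInstance a P := by
  classical
  rw [prob_eq_card_div_card, prSat]

lemma prob_satInstance (hkn : k ≤ n) (hd : 0 < d) (hq : q ≤ d ^ k) (a : Fin n → Fin d) :
    prob (fun P : Instance k n d q m => satInstance a P) = (1 - (q : ℝ) / (d ^ k : ℕ)) ^ m := by
  rw [← prob_satisfies hkn hd hq a, ← Fintype.card_fin m, ← prob_forall_apply, Fintype.card_fin]
  rfl

variable (m) in
lemma prSat_le (hkn : k ≤ n) (hd : 0 < d) (hq : q ≤ d ^ k) :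
    prSat k n d q m ≤ d ^ n * (1 - (q : ℝ) / (d ^ k : ℕ)) ^ m := by
  rw [prSat_eq_prob]
  exact (prob_exists_le_sum _).trans_eq (by simp [prob_satInstance hkn hd hq])

variable (m) in
lemma one_le_prSat_mul_binomialMean (hkn : k ≤ n) (hd : 0 < d) (hq : q < d ^ k) {p : ℝ}
    (hp : p = (q : ℝ) / (d ^ k : ℕ)) :
    1 ≤ prSat k n d q m *
      binomialMean n (1 / d) fun s => (1 + p / (1 - p) * (s / n) ^ k) ^ m := by
  have hp₁ : 0 < 1 - p := by
    rw [hp, sub_pos, div_lt_one (mod_cast (Nat.zero_le q).trans_lt hq)]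
    exact_mod_cast hq
  have : Nonempty (Fin d) := ⟨⟨0, hd⟩⟩
  have hfirst : ∑ a : Fin n → Fin d, prob (fun P : Instance k n d q m => satInstance a P) =
      d ^ n * (1 - p) ^ m := by
    simp [prob_satInstance hkn hd hq.le, hp]
  have hpair (a b : Fin n → Fin d) :
      prob (fun P : Instance k n d q m => satInstance a P ∧ satInstance b P) ≤
        (1 - p) ^ (2 * m) * (1 + p / (1 - p) * (#(agreementSet a b) / n) ^ k) ^ m := by
    simp only [satInstance, ← forall_and]
    rw [prob_forall_apply fun c : ValidConstraint k n d q => satisfies a c.1 ∧ satisfies b c.1,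
      Fintype.card_fin, pow_mul, ← mul_pow]
    exact pow_le_pow_left₀ (prob_nonneg _) (prob_satisfies_and_le hkn hq a b hp) m
  have hsecond : ∑ a : Fin n → Fin d, ∑ b : Fin n → Fin d,
      prob (fun P : Instance k n d q m => satInstance a P ∧ satInstance b P) ≤
        (d ^ n * (1 - p) ^ m) ^ 2 *
          binomialMean n (1 / d) fun s => (1 + p / (1 - p) * (s / n) ^ k) ^ m := by
    calc _ ≤ ∑ a : Fin n → Fin d, ∑ b : Fin n → Fin d,
          (1 - p) ^ (2 * m) * (1 + p / (1 - p) * (#(agreementSet a b) / n) ^ k) ^ m := by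
          gcongr with a _ b
          exact hpair a b
      _ = _ := by
          simp only [← mul_sum, sum_card_agreementSet _ fun s : ℕ =>
            (1 + p / (1 - p) * ((s : ℝ) / n) ^ k) ^ m, sum_const, card_univ, Fintype.card_fun,
            Fintype.card_fin, nsmul_eq_mul]
          push_cast
          ring
  have hmoment := sq_sum_prob_le_prob_exists_mul
    fun (a : Fin n → Fin d) (P : Instance k n d q m) => satInstance a P
  rw [hfirst, ← prSat_eq_prob] at hmoment
  have hpos : 0 < ((d : ℝ) ^ n * (1 - p) ^ m) ^ 2 := by positivity
  refine le_of_mul_le_mul_left ?_ hpos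
  calc ((d : ℝ) ^ n * (1 - p) ^ m) ^ 2 * 1 ≤ _ := by rw [mul_one]; exact hmoment
    _ ≤ _ := mul_le_mul_of_nonneg_left hsecond (prSat_eq_prob k n d q m ▸ prob_nonneg _)
    _ = _ := by ring

end Constraints

section LogInequality

open Real

lemma one_add_mul_pow_le_rpow {k : ℕ} (hk : k ≠ 0) {c x : ℝ} (hc₀ : 0 ≤ c) (hck : 1 + c ≤ k)
    (hx₀ : 0 ≤ x) (hx₁ : x ≤ 1) : 1 + c * x ^ k ≤ (1 + c) ^ x := by
  obtain ⟨j, rfl⟩ := Nat.exists_eq_add_one.2 (Nat.pos_of_ne_zero hk)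
  have hcj : c ≤ j := by push_cast at hck; linarith
  have ht : 0 ≤ 1 - x := sub_nonneg.2 hx₁
  have hbernoulli : (1 + c) ^ (1 - x) ≤ 1 + (1 - x) * c :=
    rpow_one_add_le_one_add_mul_self (by linarith) ht (by linarith)
  have hpow : x ^ j * (1 + j * (1 - x)) ≤ 1 := calc
    x ^ j * (1 + j * (1 - x)) ≤ x ^ j * (1 + (1 - x)) ^ j := by
      gcongr
      exact one_add_mul_le_pow (by linarith) j
    _ = (x * (1 + (1 - x))) ^ j := (mul_pow ..).symm
    _ ≤ 1 := pow_le_one₀ (by nlinarith) (by nlinarith [sq_nonneg (1 - x)])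
  have hmain : (1 + c * x ^ (j + 1)) * (1 + (1 - x) * c) ≤ 1 + c := by
    have hx : x ^ j * (1 + (1 - x) * c) ≤ 1 :=
      (by gcongr x ^ j * ?_; nlinarith : _ ≤ x ^ j * (1 + j * (1 - x))).trans hpow
    have := mul_le_mul_of_nonneg_left hx (mul_nonneg hc₀ hx₀)
    rw [pow_succ]
    linarith
  have hsplit : (1 + c) ^ x * (1 + c) ^ (1 - x) = 1 + c := by
    rw [← rpow_add (by linarith), add_sub_cancel, rpow_one]
  have hpos : 0 < (1 + c) ^ (1 - x) := rpow_pos_of_pos (by linarith) _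
  refine le_of_mul_le_mul_right ?_ hpos
  calc (1 + c * x ^ (j + 1)) * (1 + c) ^ (1 - x)
      ≤ (1 + c * x ^ (j + 1)) * (1 + (1 - x) * c) := by gcongr
    _ ≤ (1 + c) ^ x * (1 + c) ^ (1 - x) := hmain.trans_eq hsplit.symm

/-- The inequality is tightest at `x = 1`, where it reads `r < -α / log (1 - p)`. -/
lemma mul_log_one_add_mul_pow_lt {k : ℕ} (hk : k ≠ 0) {α r p : ℝ} (hr : 0 ≤ r) (hp₀ : 0 < p)
    (hp₁ : p ≤ ((k : ℝ) - 1) / k) (hrα : r < -α / log (1 - p)) {x : ℝ} (hx : x ∈ Set.Ioc 0 1) :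
    r * log (1 + p / (1 - p) * x ^ k) < α * x := by
  have hk₀ : (0 : ℝ) < k := mod_cast Nat.pos_of_ne_zero hk
  have hinv : 1 / (k : ℝ) ≤ 1 - p := by
    rw [sub_div, div_self hk₀.ne'] at hp₁
    linarith
  have hp : 0 < 1 - p := (by positivity : 0 < 1 / (k : ℝ)).trans_le hinv
  have hodds : 1 + p / (1 - p) = (1 - p)⁻¹ := by field_simp; ring
  have hbound : log (1 + p / (1 - p) * x ^ k) ≤ -log (1 - p) * x := calc
    log (1 + p / (1 - p) * x ^ k) ≤ log ((1 + p / (1 - p)) ^ x) := by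
      have := hx.1
      gcongr
      refine one_add_mul_pow_le_rpow hk (by positivity) ?_ hx.1.le hx.2
      rw [hodds]
      exact inv_le_of_inv_le₀ hk₀ (by simpa using hinv)
    _ = -log (1 - p) * x := by rw [hodds, log_rpow (inv_pos.2 hp), log_inv, mul_comm]
  have hcrit : r * -log (1 - p) < α := by
    rw [lt_div_iff_of_neg (log_neg hp (by linarith))] at hrα
    linarith
  calc r * log (1 + p / (1 - p) * x ^ k) ≤ r * (-log (1 - p) * x) := by gcongr
    _ = r * -log (1 - p) * x := (mul_assoc ..).symm
    _ < α * x := by gcongr; exact hx.1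

end LogInequality

section BinomialMeanAsymptotics

open Real

lemma choose_mul_one_div_pow_mul_pow_le {n s m : ℕ} {d α μ B y : ℝ} (hn : 0 < n)
    (hd : (n : ℝ) ^ α ≤ d) (hB : (n / s : ℝ) ≤ B) (hy : 0 < y)
    (hlog : m * log y ≤ s * (μ * log n)) :
    n.choose s * (1 / d) ^ s * y ^ m ≤ (exp 1 * B * n ^ (μ - α)) ^ s := by
  have hn₀ : (0 : ℝ) < n := mod_cast hn
  have hnα : 0 < (n : ℝ) ^ α := rpow_pos_of_pos hn₀ α
  have hd₀ : 0 ≤ 1 / d := one_div_nonneg.2 (hnα.le.trans hd)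
  have hpow : y ^ m ≤ ((n : ℝ) ^ μ) ^ s := by
    rw [← exp_log (pow_pos hy m), log_pow, rpow_def_of_pos hn₀, ← exp_nat_mul, mul_comm (log _)]
    exact exp_le_exp.2 hlog
  calc n.choose s * (1 / d) ^ s * y ^ m
      ≤ (exp 1 * (n / s)) ^ s * (1 / n ^ α) ^ s * (n ^ μ) ^ s := by
        gcongr
        exact choose_le_exp_one_mul_div_pow n s
    _ ≤ (exp 1 * B) ^ s * (1 / n ^ α) ^ s * (n ^ μ) ^ s := by gcongr
    _ = (exp 1 * B * n ^ (μ - α)) ^ s := by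
        rw [rpow_sub hn₀, ← mul_pow, ← mul_pow]
        ring

/-- The strict inequality on `(0, 1]` self-improves: by compactness away from `0`, and because
`x ^ k` is negligible against `x` near `0`, it holds with a margin, uniformly for parameters near
`(r, c)`. -/
lemma exists_uniform_margin {k : ℕ} (hk : 2 ≤ k) {α β r c : ℝ} (hβα : β < α) (hc : 0 ≤ c)
    (hlt : ∀ x ∈ Set.Ioc (0 : ℝ) 1, r * log (1 + c * x ^ k) < α * x) :
    ∃ γ > 0, ∃ x₀ ∈ Set.Ioc (0 : ℝ) 1, ∀ᶠ z : ℝ × ℝ in 𝓝 (r, c), 0 ≤ z.1 → 0 ≤ z.2 →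
      ∀ x ∈ Set.Icc (0 : ℝ) 1,
        (x₀ ≤ x → z.1 * log (1 + z.2 * x ^ k) ≤ (α - γ) * x) ∧
        (x ≤ x₀ → z.1 * log (1 + z.2 * x ^ k) ≤ (α - β - γ) * x) := by
  obtain ⟨x₀, hx₀, hsmall⟩ : ∃ x₀ ∈ Set.Ioc (0 : ℝ) 1, r * c * x₀ < α - β := by
    have hcont : Tendsto (fun x => r * c * x) (𝓝[>] 0) (𝓝 (r * c * 0)) :=
      ((continuous_const_mul (r * c)).tendsto 0).mono_left nhdsWithin_le_nhds
    have hev := hcont.eventually (gt_mem_nhds (by linarith : r * c * 0 < α - β))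
    exact ((eventually_mem_set.2 (Ioc_mem_nhdsGT one_pos)).and hev).exists
  have hbulk : ∀ᶠ w : ℝ × ℝ × ℝ in 𝓝 (0, r, c), ∀ x ∈ Set.Icc x₀ 1,
      w.2.1 * log (1 + w.2.2 * x ^ k) < (α - w.1) * x := by
    refine isCompact_Icc.eventually_forall_of_forall_eventually fun x hx => ?_
    have hx_pos : 0 < x := hx₀.1.trans_le hx.1
    have hne : 1 + c * x ^ k ≠ 0 := by positivity
    refine ContinuousAt.eventually_lt ?_ ?_ ?_
    · fun_prop (disch := exact hne)
    · fun_prop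
    · simpa using hlt x ⟨hx_pos, hx.2⟩
  have hedge : ∀ᶠ w : ℝ × ℝ × ℝ in 𝓝 (0, r, c), w.2.1 * w.2.2 * x₀ < α - β - w.1 :=
    ContinuousAt.eventually_lt (by fun_prop) (by fun_prop) (by simpa using hsmall)
  rw [nhds_prod_eq] at hbulk hedge
  have hboth := (hbulk.and hedge).curry.filter_mono (nhdsWithin_le_nhds (s := Set.Ioi 0))
  obtain ⟨γ, hγ, hparam⟩ := (hboth.and self_mem_nhdsWithin).exists.imp fun _ h => h.symm
  refine ⟨γ, hγ, x₀, hx₀, hparam.mono fun z hz hz₁ hz₂ x hx => ⟨fun hle => ?_, fun hle => ?_⟩⟩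
  · exact (hz.1 x ⟨hle, hx.2⟩).le
  · have hxk : x ^ k ≤ x₀ * x := calc
      x ^ k ≤ x ^ 2 := pow_le_pow_of_le_one hx.1 hx.2 hk
      _ = x * x := sq x
      _ ≤ x₀ * x := mul_le_mul_of_nonneg_right hle hx.1
    calc z.1 * log (1 + z.2 * x ^ k) ≤ z.1 * (z.2 * (x₀ * x)) := by
          have := hx.1
          gcongr
          refine (log_le_sub_one_of_pos (by positivity)).trans ?_
          rw [add_sub_cancel_left]
          gcongr
      _ = z.1 * z.2 * x₀ * x := by ring
      _ ≤ (α - β - γ) * x := mul_le_mul_of_nonneg_right hz.2.le hx.1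

/-- The terms with overlap `x = s / n ≥ n ^ (-β)`; the entropy factor `choose n s` is at most
`(e / x) ^ s`, which costs a constant for `x ≥ x₀` and at most `n ^ β` per variable below. -/
lemma choose_mul_one_div_pow_mul_pow_le_geometric {n k s m : ℕ} {d α β γ x₀ c : ℝ} (hn : 1 < n)
    (hd : (n : ℝ) ^ α ≤ d) (hc : 0 ≤ c) (hx₀ : x₀ ∈ Set.Ioc 0 1)
    (hβ : (n : ℝ) ^ (-β) ≤ s / n)
    (hlarge : x₀ ≤ (s / n : ℝ) →
      m / (n * log n) * log (1 + c * (s / n) ^ k) ≤ (α - γ) * (s / n))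
    (hsmall : (s / n : ℝ) ≤ x₀ →
      m / (n * log n) * log (1 + c * (s / n) ^ k) ≤ (α - β - γ) * (s / n)) :
    n.choose s * (1 / d) ^ s * (1 + c * (s / n) ^ k) ^ m ≤
      (exp 1 / x₀ * (n : ℝ) ^ (-γ)) ^ s := by
  have hn₀ : (0 : ℝ) < n := mod_cast one_pos.trans hn
  have hlogn : 0 < log n := log_pos (mod_cast hn)
  have hx_pos : (0 : ℝ) < s / n := (rpow_pos_of_pos hn₀ _).trans_le hβ
  have hrescale {μ : ℝ} (h : m / (n * log n) * log (1 + c * (s / n) ^ k) ≤ μ * (s / n)) :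
      m * log (1 + c * (s / n) ^ k) ≤ s * (μ * log n) := by
    have := mul_le_mul_of_nonneg_left h (mul_pos hn₀ hlogn).le
    field_simp at this
    linarith
  rcases le_total x₀ (s / n : ℝ) with hx | hx
  · have hratio : (n / s : ℝ) ≤ 1 / x₀ := by
      rw [← one_div_div]
      exact one_div_le_one_div_of_le hx₀.1 hx
    refine (choose_mul_one_div_pow_mul_pow_le (one_pos.trans hn) hd hratio (by positivity)
      (hrescale (hlarge hx))).trans_eq ?_
    rw [sub_sub_cancel_left, mul_one_div]
  · have hratio : (n / s : ℝ) ≤ (n : ℝ) ^ β := by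
      rw [← one_div_div, ← neg_neg β, rpow_neg hn₀.le (-β), ← one_div]
      exact one_div_le_one_div_of_le (rpow_pos_of_pos hn₀ _) hβ
    refine (choose_mul_one_div_pow_mul_pow_le (one_pos.trans hn) hd hratio (by positivity)
      (hrescale (hsmall hx))).trans ?_
    rw [mul_assoc, ← rpow_add hn₀, show β + (α - β - γ - α) = -γ by ring]
    gcongr
    exact le_div_self (exp_pos 1).le hx₀.1 hx₀.2

lemma one_add_mul_pow_pow_le_exp {c x y : ℝ} {k m : ℕ} (hc : 0 ≤ c) (hx : 0 ≤ x) (hxy : x ≤ y) :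
    (1 + c * x ^ k) ^ m ≤ exp (m * (c * y ^ k)) := by
  rw [exp_nat_mul]
  gcongr
  calc 1 + c * x ^ k ≤ c * y ^ k + 1 := by rw [add_comm]; gcongr
    _ ≤ exp (c * y ^ k) := add_one_le_exp _

lemma binomialMean_le_exp_add_geometric {n k m : ℕ} {d α β γ x₀ c ρ : ℝ} (hn : 1 < n)
    (hα : 0 ≤ α) (hd : (n : ℝ) ^ α ≤ d) (hc : 0 ≤ c) (hx₀ : x₀ ∈ Set.Ioc 0 1)
    (hρ : ρ = exp 1 / x₀ * (n : ℝ) ^ (-γ)) (hρ₁ : ρ < 1)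
    (hmargin : ∀ x ∈ Set.Icc (0 : ℝ) 1,
      (x₀ ≤ x → m / (n * log n) * log (1 + c * x ^ k) ≤ (α - γ) * x) ∧
      (x ≤ x₀ → m / (n * log n) * log (1 + c * x ^ k) ≤ (α - β - γ) * x)) :
    binomialMean n (1 / d) (fun s => (1 + c * (s / n) ^ k) ^ m) ≤
      exp (m * (c * ((n : ℝ) ^ (-β)) ^ k)) + ρ / (1 - ρ) := by
  have hn₀ : (0 : ℝ) < n := mod_cast one_pos.trans hn
  have hd₁ : 1 ≤ d := (one_le_rpow (mod_cast hn.le) hα).trans hd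
  have hρ₀ : 0 ≤ ρ := by
    have := hx₀.1
    rw [hρ]
    positivity
  refine binomialMean_le_add_geometric (by positivity) (div_le_one_of_le₀ hd₁ (by positivity))
    (exp_pos _).le hρ₀ hρ₁ (fun s => by positivity) fun s hs => ?_
  rcases le_total (s / n : ℝ) ((n : ℝ) ^ (-β)) with hx | hx
  · exact Or.inl (one_add_mul_pow_pow_le_exp hc (by positivity) hx)
  · have hs₀ : s ≠ 0 := by
      rintro rfl
      simp [(rpow_pos_of_pos hn₀ (-β)).not_ge] at hx
    obtain ⟨hlarge, hsmall⟩ :=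
      hmargin (s / n) ⟨by positivity, div_le_one_of_le₀ (mod_cast hs) hn₀.le⟩
    exact Or.inr ⟨hs₀, hρ ▸
      choose_mul_one_div_pow_mul_pow_le_geometric hn hd hc hx₀ hx hlarge hsmall⟩

lemma tendsto_log_mul_rpow_neg_atTop {a : ℝ} (ha : 0 < a) :
    Tendsto (fun n : ℕ => log n * (n : ℝ) ^ (-a)) atTop (𝓝 0) := by
  refine (((isLittleO_log_rpow_atTop ha).tendsto_div_nhds_zero).comp
    tendsto_natCast_atTop_atTop).congr fun n => ?_
  simp [rpow_neg, div_eq_mul_inv]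

lemma tendsto_exp_bulk_one {k : ℕ} {β r c : ℝ} (hkβ : 1 < k * β) {C : ℕ → ℝ} {m : ℕ → ℕ}
    (hm : Tendsto (fun n : ℕ => m n / (n * log n)) atTop (𝓝 r)) (hC : Tendsto C atTop (𝓝 c)) :
    Tendsto (fun n : ℕ => exp (m n * (C n * ((n : ℝ) ^ (-β)) ^ k))) atTop (𝓝 1) := by
  have hlim := (hm.mul hC).mul (tendsto_log_mul_rpow_neg_atTop (sub_pos.2 hkβ))
  rw [mul_zero] at hlim
  rw [← exp_zero]
  refine (continuous_exp.tendsto 0).comp (hlim.congr' ?_)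
  filter_upwards [eventually_gt_atTop 1] with n hn
  have hn₀ : (0 : ℝ) < n := mod_cast one_pos.trans hn
  have hlogn : 0 < log n := log_pos (mod_cast hn)
  rw [← rpow_mul_natCast hn₀.le, neg_sub, show 1 - k * β = 1 + -β * k by ring,
    rpow_add hn₀, rpow_one]
  field_simp

lemma tendsto_binomialMean_one {k : ℕ} (hk : 2 ≤ k) {α r c : ℝ} (hα : 1 / (k : ℝ) < α)
    (hlt : ∀ x ∈ Set.Ioc (0 : ℝ) 1, r * log (1 + c * x ^ k) < α * x)
    {d C : ℕ → ℝ} {m : ℕ → ℕ} (hd : ∀ n : ℕ, (n : ℝ) ^ α ≤ d n) (hC₀ : ∀ n, 0 ≤ C n)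
    (hm : Tendsto (fun n : ℕ => m n / (n * log n)) atTop (𝓝 r)) (hC : Tendsto C atTop (𝓝 c)) :
    Tendsto (fun n => binomialMean n (1 / d n) fun s => (1 + C n * (s / n) ^ k) ^ m n)
      atTop (𝓝 1) := by
  have hk₀ : (0 : ℝ) < k := mod_cast two_pos.trans_le hk
  obtain ⟨β, hkβ, hβα⟩ := exists_between hα
  obtain ⟨γ, hγ, x₀, hx₀, hmargin⟩ :=
    exists_uniform_margin hk hβα (ge_of_tendsto' hC hC₀) hlt
  have hbulk := tendsto_exp_bulk_one ((div_lt_iff₀' hk₀).1 hkβ) hm hC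
  have hratio : Tendsto (fun n : ℕ => exp 1 / x₀ * (n : ℝ) ^ (-γ)) atTop (𝓝 0) := by
    simpa using ((tendsto_rpow_neg_atTop hγ).comp tendsto_natCast_atTop_atTop).const_mul
      (exp 1 / x₀)
  have hupper := hbulk.add (hratio.div (tendsto_const_nhds.sub hratio)
    (by norm_num : (1 : ℝ) - 0 ≠ 0))
  rw [zero_div, add_zero] at hupper
  have hα₀ : 0 ≤ α := ((one_div_pos.2 hk₀).trans hα).le
  refine tendsto_of_tendsto_of_tendsto_of_le_of_le' tendsto_const_nhds hupper ?_ ?_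
  · filter_upwards [eventually_ge_atTop 1] with n hn
    have hd₁ : 1 ≤ d n := (one_le_rpow (mod_cast hn) hα₀).trans (hd n)
    have := hC₀ n
    exact one_le_binomialMean (by positivity) (div_le_one_of_le₀ hd₁ (by positivity))
      fun s _ => one_le_pow₀ (le_add_of_nonneg_right (by positivity))
  · filter_upwards [eventually_gt_atTop 1, hratio.eventually (gt_mem_nhds one_pos),
      (hm.prodMk_nhds hC).eventually hmargin] with n hn hratio₁ hmargin
    have hlogn : 0 < log n := log_pos (mod_cast hn)
    exact binomialMean_le_exp_add_geometric hn hα₀ (hd n) (hC₀ n) hx₀ rfl hratio₁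
      (hmargin (by positivity) (hC₀ n))

end BinomialMeanAsymptotics

section ModelRB

open Real

lemma rpow_le_dOf (α : ℝ) (n : ℕ) : (n : ℝ) ^ α ≤ dOf α n := Nat.le_ceil _

lemma dOf_pos (α : ℝ) {n : ℕ} (hn : 0 < n) : 0 < dOf α n :=
  Nat.ceil_pos.2 (rpow_pos_of_pos (mod_cast hn) α)

lemma dOf_le_two_mul_rpow {α : ℝ} (hα : 0 ≤ α) {n : ℕ} (hn : 0 < n) :
    (dOf α n : ℝ) ≤ 2 * (n : ℝ) ^ α := by
  have hone : 1 ≤ (n : ℝ) ^ α := one_le_rpow (mod_cast hn) hα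
  calc (dOf α n : ℝ) ≤ (n : ℝ) ^ α + 1 := (Nat.ceil_lt_add_one (zero_le_one.trans hone)).le
    _ ≤ 2 * (n : ℝ) ^ α := by linarith

lemma tendsto_dOf_atTop {α : ℝ} (hα : 0 < α) : Tendsto (dOf α) atTop atTop :=
  tendsto_nat_ceil_atTop.comp ((tendsto_rpow_atTop hα).comp tendsto_natCast_atTop_atTop)

lemma le_mOf (r : ℝ) (n : ℕ) : r * n * log n ≤ mOf r n := Nat.le_ceil _

lemma tendsto_mOf_div {r : ℝ} (hr : 0 ≤ r) :
    Tendsto (fun n : ℕ => mOf r n / (n * log n)) atTop (𝓝 r) := by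
  have hscale : Tendsto (fun n : ℕ => n * log n) atTop atTop :=
    tendsto_natCast_atTop_atTop.atTop_mul_atTop₀
      (tendsto_log_atTop.comp tendsto_natCast_atTop_atTop)
  refine ((tendsto_nat_ceil_mul_div_atTop hr).comp hscale).congr fun n => ?_
  rw [Function.comp_apply, mOf, mul_assoc]

lemma qOf_le_pow {p : ℝ} (hp : p ≤ 1) (k d : ℕ) : qOf p k d ≤ d ^ k := by
  refine Nat.ceil_le.2 ?_
  push_cast
  exact mul_le_of_le_one_left (by positivity) hp

lemma le_qOf_div_pow (p : ℝ) (k : ℕ) {d : ℕ} (hd : 0 < d) : p ≤ qOf p k d / (d ^ k : ℕ) := by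
  rw [le_div_iff₀ (mod_cast pow_pos hd k), Nat.cast_pow]
  exact Nat.le_ceil _

lemma tendsto_qOf_div_pow {p : ℝ} (hp : 0 ≤ p) {k : ℕ} (hk : k ≠ 0) :
    Tendsto (fun d : ℕ => (qOf p k d : ℝ) / (d ^ k : ℕ)) atTop (𝓝 p) := by
  have hpow : Tendsto (fun d : ℕ => ((d ^ k : ℕ) : ℝ)) atTop atTop :=
    tendsto_natCast_atTop_atTop.comp (tendsto_pow_atTop hk)
  refine ((tendsto_nat_ceil_mul_div_atTop hp).comp hpow).congr fun d => ?_
  rw [Function.comp_apply, qOf, Nat.cast_pow]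

lemma prSatRB_le {k n : ℕ} {α r p : ℝ} (hα : 0 ≤ α) (hp₀ : 0 ≤ p) (hp : p < 1)
    (hn : 0 < n) (hkn : k ≤ n) :
    prSatRB k α r p n ≤ (2 * (n : ℝ) ^ (α + r * log (1 - p))) ^ n := by
  have hn₀ : (0 : ℝ) < n := mod_cast hn
  have hp₁ : 0 < 1 - p := sub_pos.2 hp
  have hq := qOf_le_pow hp.le k (dOf α n)
  have hdensity : 1 - (qOf p k (dOf α n) : ℝ) / (dOf α n ^ k : ℕ) ≤ 1 - p :=
    sub_le_sub_left (le_qOf_div_pow p k (dOf_pos α hn)) 1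
  have hnonneg : 0 ≤ 1 - (qOf p k (dOf α n) : ℝ) / (dOf α n ^ k : ℕ) :=
    sub_nonneg.2 (div_le_one_of_le₀ (mod_cast hq) (by positivity))
  have hunsat : (1 - p) ^ mOf r n ≤ ((n : ℝ) ^ (r * log (1 - p))) ^ n := by
    rw [← rpow_natCast (1 - p), rpow_def_of_pos hp₁, rpow_def_of_pos hn₀, ← exp_nat_mul]
    refine exp_le_exp.2 ?_
    nlinarith [le_mOf r n, log_nonpos hp₁.le (sub_le_self 1 hp₀)]
  calc prSatRB k α r p n
      ≤ dOf α n ^ n * (1 - (qOf p k (dOf α n) : ℝ) / (dOf α n ^ k : ℕ)) ^ mOf r n :=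
        prSat_le _ hkn (dOf_pos α hn) hq
    _ ≤ (2 * (n : ℝ) ^ α) ^ n * ((n : ℝ) ^ (r * log (1 - p))) ^ n := by
        gcongr
        · exact dOf_le_two_mul_rpow hα hn
        · exact (pow_le_pow_left₀ hnonneg hdensity _).trans hunsat
    _ = (2 * (n : ℝ) ^ (α + r * log (1 - p))) ^ n := by
        rw [rpow_add hn₀, ← mul_pow, mul_assoc]

lemma tendsto_prSatRB_zero (k : ℕ) {α r p : ℝ} (hα : 0 ≤ α) (hp₀ : 0 ≤ p) (hp : p < 1)
    (hr : α + r * log (1 - p) < 0) : Tendsto (prSatRB k α r p) atTop (𝓝 0) := by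
  have hbase : Tendsto (fun n : ℕ => 2 * (n : ℝ) ^ (α + r * log (1 - p))) atTop (𝓝 0) := by
    simpa using ((tendsto_rpow_neg_atTop (neg_pos.2 hr)).comp
      tendsto_natCast_atTop_atTop).const_mul 2
  refine tendsto_of_tendsto_of_tendsto_of_le_of_le' tendsto_const_nhds hbase
    (Eventually.of_forall fun n => ?_) ?_
  · rw [prSatRB, prSat_eq_prob]
    exact prob_nonneg _
  · filter_upwards [eventually_gt_atTop 0, eventually_ge_atTop k,
      hbase.eventually (ge_mem_nhds one_pos)] with n hn hkn hle
    exact (prSatRB_le hα hp₀ hp hn hkn).trans (pow_le_of_le_one (by positivity) hle hn.ne')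

lemma tendsto_prSatRB_one {k : ℕ} (hk : 2 ≤ k) {α r p : ℝ} (hα : 1 / (k : ℝ) < α) (hr : 0 ≤ r)
    (hp₀ : 0 ≤ p) (hp₁ : p < 1)
    (hlt : ∀ x ∈ Set.Ioc (0 : ℝ) 1, r * log (1 + p / (1 - p) * x ^ k) < α * x) :
    Tendsto (prSatRB k α r p) atTop (𝓝 1) := by
  have hα₀ : 0 < α := (by positivity : 0 ≤ 1 / (k : ℝ)).trans_lt hα
  let density : ℕ → ℝ := fun n => (qOf p k (dOf α n) : ℝ) / (dOf α n ^ k : ℕ)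
  have hdensity : Tendsto density atTop (𝓝 p) :=
    (tendsto_qOf_div_pow hp₀ (by omega)).comp (tendsto_dOf_atTop hα₀)
  have hodds : Tendsto (fun n => density n / (1 - density n)) atTop (𝓝 (p / (1 - p))) :=
    hdensity.div (tendsto_const_nhds.sub hdensity) (sub_pos.2 hp₁).ne'
  have hodds₀ (n : ℕ) : 0 ≤ density n / (1 - density n) := by
    have hle : density n ≤ 1 := div_le_one_of_le₀ (mod_cast qOf_le_pow hp₁.le ..) (by positivity)
    exact div_nonneg (by positivity) (sub_nonneg.2 hle)
  have hmean := tendsto_binomialMean_one hk hα hlt (rpow_le_dOf α) hodds₀ (tendsto_mOf_div hr) hodds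
  have hlower := hmean.inv₀ one_ne_zero
  rw [inv_one] at hlower
  refine tendsto_of_tendsto_of_tendsto_of_le_of_le' hlower tendsto_const_nhds ?_
    (Eventually.of_forall fun n => ?_)
  · filter_upwards [eventually_ge_atTop k, hdensity.eventually (gt_mem_nhds hp₁),
      hmean.eventually (lt_mem_nhds one_pos)] with n hkn hlt hpos
    have hd : 0 < dOf α n := dOf_pos α (by omega)
    have hq : qOf p k (dOf α n) < dOf α n ^ k := by
      have := (div_lt_one (mod_cast pow_pos hd k)).1 hlt
      exact_mod_cast this
    rw [inv_le_iff_one_le_mul₀ hpos]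
    exact one_le_prSat_mul_binomialMean _ hkn hd hq rfl
  · rw [prSatRB, prSat_eq_prob]
    exact prob_le_one _

end ModelRB

end RB

/-- Here `x` is the fraction of the variables on which two assignments agree. At `x = 1` the
inequality reads `r < -α / log (1 - p)`, but for `p` close to `1` it can fail at some `x < 1`
although it holds at `x = 1`. -/
theorem rb_phase_transition_in_r_general (k : ℕ) (hk : 2 ≤ k) (α r p : ℝ)
    (hα : 1 / (k : ℝ) < α) (hr : 0 ≤ r) (hp0 : 0 < p) (hp1 : p < 1) :
    ((∀ x ∈ Set.Ioc (0 : ℝ) 1, r * Real.log (1 + p / (1 - p) * x ^ k) < α * x) →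
      Tendsto (RB.prSatRB k α r p) atTop (𝓝 1)) ∧
    (-α / Real.log (1 - p) < r → Tendsto (RB.prSatRB k α r p) atTop (𝓝 0)) := by
  refine ⟨RB.tendsto_prSatRB_one hk hα hr hp0.le hp1, fun hrα => ?_⟩
  have hα₀ : 0 ≤ α := (by positivity : 0 ≤ 1 / (k : ℝ)).trans hα.le
  rw [div_lt_iff_of_neg (Real.log_neg (sub_pos.2 hp1) (by linarith))] at hrα
  exact RB.tendsto_prSatRB_zero k hα₀ hp0.le hp1 (by linarith)

/-- **Phase transition of model RB in the density parameter `r`** (Theorem 1):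
for an integer `k ≥ 2` and real constants `α > 1/k`, `r > 0` and `0 < p ≤ (k-1)/k`,
the probability that a random instance of `RB(k,n,α,r,p)` is satisfiable tends,
as `n → ∞`, to `1` if `r < r_cr` and to `0` if `r > r_cr`,
where `r_cr = -α / ln (1-p)`. -/
theorem rb_phase_transition_in_r (k : ℕ) (hk : 2 ≤ k) (α r p : ℝ)
    (hα : 1 / (k : ℝ) < α) (hr : 0 < r) (hp0 : 0 < p) (hp1 : p ≤ ((k : ℝ) - 1) / k) :
    (r < -α / Real.log (1 - p) →
      Tendsto (fun n : ℕ => RB.prSatRB k α r p n) atTop (𝓝 1)) ∧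
    (-α / Real.log (1 - p) < r →
      Tendsto (fun n : ℕ => RB.prSatRB k α r p n) atTop (𝓝 0)) := by
  have hk₀ : (0 : ℝ) < k := mod_cast two_pos.trans_le hk
  have hp : p < 1 := hp1.trans_lt ((div_lt_one hk₀).2 (sub_one_lt _))
  obtain ⟨hone, hzero⟩ := rb_phase_transition_in_r_general k hk α r p hα hr.le hp0 hp
  exact ⟨fun hrα => hone fun _ hx =>
    RB.mul_log_one_add_mul_pow_lt (by omega) hr.le hp0 hp1 hrα hx, hzero⟩
end

section
/- Consider a single forced random RB constraint over n variables (k ≤ n) with common domain D of size d, forced to allow a fixed total assignment t: its scope is a uniformly random set of k distinct variables, and its forbidden set is a uniformly random set of exactly q tuples (0 ≤ q ≤ d^k - 1) from D^k excluding the tuple induced by t on the scope. Let t' be a total assignment agreeing with t on exactly a variables, and set ρ = C(a,k)/C(n,k). Then the probability that t' satisfies the constraint equals ρ + (1-ρ)·(1 - q/(d^k - 1)). -/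
open scoped Classical

/-!
Sort the constraints by scope. Over a scope `s` of size `k`, the forbidden sets avoiding the tuples
induced by a family `A` of assignments are the `q`-subsets of the remaining tuples, so only the
number of distinct induced tuples matters. For `A = {t, t'}` it is `1` on the `C(a,k)` scopes inside
the agreement set and `2` on all the others; hence, given such another scope, `t'` survives with
probability `C(d ^ k - 2, q) / C(d ^ k - 1, q) = 1 - q / (d ^ k - 1)`.
-/

open Finset

-- At `N = 0` both sides are `1`, the left as `1 / 1` and the right because `0 / 0 = 0`.
theorem choose_sub_one_div_choose {K : Type*} [Field K] [CharZero K] {N q : ℕ} (hq : q ≤ N) :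
    ((N - 1).choose q : K) / N.choose q = 1 - (q : K) / N := by
  rcases N with _ | M
  · obtain rfl : q = 0 := Nat.le_zero.mp hq
    simp
  · have hchoose : ((M + 1).choose q : K) ≠ 0 := mod_cast (Nat.choose_pos hq).ne'
    have hM : ((M + 1 : ℕ) : K) ≠ 0 := mod_cast M.succ_ne_zero
    rw [one_sub_div hM, div_eq_div_iff hchoose hM, ← Nat.cast_sub hq, Nat.add_sub_cancel,
      mul_comm ((M + 1 - q : ℕ) : K)]
    exact_mod_cast Nat.choose_mul_succ_eq M q

theorem sum_powersetCard_ite_subset {ι R : Type*} [DecidableEq ι] [Ring R] {A S : Finset ι}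
    (hAS : A ⊆ S) (k : ℕ) (x y : R) :
    ∑ s ∈ S.powersetCard k, (if s ⊆ A then x else y)
      = (#A).choose k * x + ((#S).choose k - (#A).choose k) * y := by
  have hfilter : {s ∈ S.powersetCard k | s ⊆ A} = A.powersetCard k := by
    ext s
    simp only [mem_filter, mem_powersetCard]
    exact ⟨fun h => ⟨h.2, h.1.2⟩, fun h => ⟨⟨h.1.trans hAS, h.2⟩, h.1⟩⟩
  have hsdiff : (#{s ∈ S.powersetCard k | ¬ s ⊆ A} : R) = (#S).choose k - (#A).choose k := by
    rw [eq_sub_iff_add_eq', ← card_powersetCard k A, ← hfilter, ← card_powersetCard k S,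
      ← Nat.cast_add, card_filter_add_card_filter_not]
  rw [sum_ite, sum_const, sum_const, nsmul_eq_mul, nsmul_eq_mul, hsdiff, hfilter,
    card_powersetCard]

theorem card_image_restrict_pair {ι α : Type*} [Fintype ι] [DecidableEq ι] [DecidableEq α]
    (f g : ι → α) (s : Finset ι) :
    #(({f, g} : Finset (ι → α)).image s.restrict)
      = if s ⊆ ({i | f i = g i} : Finset ι) then 1 else 2 := by
  have hrestrict : s.restrict f = s.restrict g ↔ s ⊆ ({i | f i = g i} : Finset ι) := by
    simp [funext_iff, subset_iff]
  rw [image_insert, image_singleton]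
  split_ifs with hs
  · rw [hrestrict.mpr hs, pair_eq_singleton, card_singleton]
  · exact card_pair (mt hrestrict.mp hs)

namespace RB

variable {n d : ℕ}

theorem card_forall_satisfies (k q : ℕ) (A : Finset (Fin n → Fin d)) :
    #{c : ValidConstraint k n d q | ∀ t ∈ A, satisfies t c.1}
      = ∑ s ∈ powersetCard k univ, (d ^ k - #(A.image s.restrict)).choose q := by
  have hsigma : (univ.filter fun c : ValidConstraint k n d q => ∀ t ∈ A, satisfies t c.1).map
        (.subtype _)
      = (powersetCard k univ).sigma fun s => powersetCard q (A.image s.restrict)ᶜ := by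
    ext ⟨s, F⟩
    have hforbidden : F ⊆ (A.image s.restrict)ᶜ ↔ ∀ t ∈ A, satisfies t ⟨s, F⟩ := by
      simp [satisfies, subset_compl_iff_disjoint_left, disjoint_left, restrict_def]
    simp only [mem_map, mem_filter_univ, Function.Embedding.subtype_apply, mem_sigma,
      mem_powersetCard, subset_univ, true_and, hforbidden]
    constructor
    · rintro ⟨⟨_, hs, hFq⟩, hF, rfl⟩
      exact ⟨hs, hF, hFq⟩
    · rintro ⟨hs, hF, hFq⟩
      exact ⟨⟨⟨s, F⟩, hs, hFq⟩, hF, rfl⟩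
  rw [← card_map (.subtype _), hsigma, card_sigma]
  refine sum_congr rfl fun s hs => ?_
  rw [card_powersetCard, card_compl, Fintype.card_fun, Fintype.card_coe, Fintype.card_fin,
    (mem_powersetCard.mp hs).2]

theorem card_satisfies (k q : ℕ) (t : Fin n → Fin d) :
    #{c : ValidConstraint k n d q | satisfies t c.1} = n.choose k * (d ^ k - 1).choose q := by
  simpa using card_forall_satisfies k q {t}

theorem card_satisfies_and_satisfies {R : Type*} [Ring R] (k q : ℕ) (t t' : Fin n → Fin d) :
    (#{c : ValidConstraint k n d q | satisfies t c.1 ∧ satisfies t' c.1} : R)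
      = (#{i | t i = t' i}).choose k * (d ^ k - 1).choose q
        + (n.choose k - (#{i | t i = t' i}).choose k) * (d ^ k - 2).choose q := by
  have hcount := card_forall_satisfies k q {t, t'}
  simp only [forall_mem_insert, mem_singleton, forall_eq, card_image_restrict_pair] at hcount
  rw [hcount, Nat.cast_sum]
  simp only [apply_ite (d ^ k - ·), apply_ite (Nat.choose · q), apply_ite ((↑) : ℕ → R)]
  rw [sum_powersetCard_ite_subset (subset_univ _), card_univ, Fintype.card_fin]

end RB

/-- **Probability that an assignment satisfies a single forced random RB constraint**:
consider a random constraint over `n` variables (`k ≤ n`) with common domain of size `d`,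
forced to allow the fixed total assignment `t`: its scope is a uniformly random set of `k`
distinct variables and its forbidden set a uniformly random set of exactly `q ≤ d^k - 1`
tuples excluding the tuple induced by `t` (equivalently, the uniform distribution over
constraints satisfied by `t`). If the total assignment `t'` agrees with `t` on exactly
`a` variables then, with `ρ = C(a,k)/C(n,k)`, the probability that `t'` satisfies the
constraint equals `ρ + (1-ρ)·(1 - q/(d^k - 1))`. -/
theorem rb_forced_constraint_probability (k n d q a : ℕ) (hkn : k ≤ n) (hq : q < d ^ k)
    (t t' : Fin n → Fin d)
    (ha : (Finset.univ.filter fun i : Fin n => t i = t' i).card = a) :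
    ((Finset.univ.filter fun c : RB.ValidConstraint k n d q =>
        RB.satisfies t c.1 ∧ RB.satisfies t' c.1).card : ℝ)
      / ((Finset.univ.filter fun c : RB.ValidConstraint k n d q =>
          RB.satisfies t c.1).card : ℝ)
    = (a.choose k : ℝ) / (n.choose k)
      + (1 - (a.choose k : ℝ) / (n.choose k)) * (1 - (q : ℝ) / ((d : ℝ) ^ k - 1)) := by
  have hscopes : (n.choose k : ℝ) ≠ 0 := mod_cast (Nat.choose_pos hkn).ne'
  have hforbidden : ((d ^ k - 1).choose q : ℝ) ≠ 0 :=
    mod_cast (Nat.choose_pos (Nat.le_sub_one_of_lt hq)).ne'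
  have hdisagree : ((d ^ k - 2).choose q : ℝ) / (d ^ k - 1).choose q
      = 1 - (q : ℝ) / ((d : ℝ) ^ k - 1) := by
    have h := choose_sub_one_div_choose (K := ℝ) (Nat.le_sub_one_of_lt hq)
    rwa [Nat.sub_sub, Nat.cast_pred (Nat.zero_lt_of_lt hq), Nat.cast_pow] at h
  rw [RB.card_satisfies_and_satisfies, RB.card_satisfies, ha, ← hdisagree, Nat.cast_mul]
  field_simp
end

section
/- Fix an integer k ≥ 2 and reals α > 0, r > 0, 0 < p < 1 and δ ∈ (0,1]. For n ≥ k define B(n) = C(n - ⌊δn⌋, k)/C(n,k) (with C(a,k) = 0 if a < k) and F(n) = C(n, ⌊δn⌋) · (n^α - 1)^{⌊δn⌋} · [B(n) + (1-p)·(1 - B(n))]^{r·n·ln n}. Then ln F(n) = n·ln n·(r·ln(1 - p + p·(1-δ)^k) + α·δ) + O(n) as n → ∞. -/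
open Filter Asymptotics

/-- `B(n) = C(n - ⌊δn⌋, k) / C(n,k)`, the probability that a random scope of `k`
variables lies inside the agreement set of two assignments at relative distance `δ`. -/
noncomputable def B (k : ℕ) (δ : ℝ) (n : ℕ) : ℝ :=
  (((n - ⌊δ * (n : ℝ)⌋₊).choose k : ℝ)) / ((n.choose k : ℝ))

/-- `F(n) = C(n,⌊δn⌋) · (n^α - 1)^⌊δn⌋ · [B(n) + (1-p)·(1 - B(n))]^(r·n·ln n)`, the
expected number of solutions at relative Hamming distance `δ` from the forced solution
of a forced random `RB(k,n,α,r,p)` instance. -/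
noncomputable def F (k : ℕ) (α r p δ : ℝ) (n : ℕ) : ℝ :=
  ((n.choose ⌊δ * (n : ℝ)⌋₊ : ℝ)) * ((n : ℝ) ^ α - 1) ^ (⌊δ * (n : ℝ)⌋₊) *
    (B k δ n + (1 - p) * (1 - B k δ n)) ^ (r * n * Real.log n)

/-!
Write `N = ⌊δn⌋ = δn + O(1)`. The binomial coefficient contributes `ln C(n, N) ≤ n ln 2`, and
`N ln (n^α - 1) = (δn + O(1)) (α ln n + O(1))` contributes the term `αδ n ln n`. The ratio `B(n)`
is a product of `k` factors `(n - N - j)/(n - j) = 1 - δ + O(1/n)`, so replacing `B(n)` by its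
limit changes the logarithm of the bracket by `O(1/n)`, which the exponent `r n ln n` inflates to
`O(ln n)` only.
-/

open scoped Topology

section ChooseRatio

variable {ι : Type*} {l : Filter ι} {m d : ι → ℕ} {c : ℝ}

variable (l m) in
theorem isBigO_natCast_tsub_sub (j : ℕ) :
    (fun i => ((m i - j : ℕ) : ℝ) - m i) =O[l] (fun _ => (1 : ℝ)) := by
  refine .of_bound j (.of_forall fun i => ?_)
  have hupper : ((m i - j : ℕ) : ℝ) ≤ m i := by exact_mod_cast Nat.sub_le _ _
  have hlower : (m i : ℝ) ≤ (m i - j : ℕ) + j := by exact_mod_cast le_tsub_add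
  rw [norm_one, mul_one, Real.norm_eq_abs, abs_le]
  constructor <;> linarith

theorem isEquivalent_natCast_tsub (hd : Tendsto d l atTop) (j : ℕ) :
    (fun i => ((d i - j : ℕ) : ℝ)) ~[l] (fun i => (d i : ℝ)) :=
  (isBigO_natCast_tsub_sub l d j).trans_isLittleO <| isLittleO_one_left_iff ℝ |>.2 <|
    tendsto_norm_atTop_atTop.comp (tendsto_natCast_atTop_atTop.comp hd)

theorem isBigO_tsub_div_tsub_sub (hd : Tendsto d l atTop)
    (hm : (fun i => (m i : ℝ) - c * d i) =O[l] (fun _ => (1 : ℝ))) (j : ℕ) :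
    (fun i => ((m i - j : ℕ) : ℝ) / (d i - j : ℕ) - c) =O[l] (fun i => (d i : ℝ)⁻¹) := by
  have hnum : (fun i => ((m i - j : ℕ) : ℝ) - c * (d i - j : ℕ)) =O[l] (fun _ => (1 : ℝ)) :=
    (((isBigO_natCast_tsub_sub l m j).add hm).sub
      ((isBigO_natCast_tsub_sub l d j).const_mul_left c)).congr_left fun i => by ring
  have hden : (fun i => ((d i - j : ℕ) : ℝ)⁻¹) =O[l] (fun i => (d i : ℝ)⁻¹) :=
    (isEquivalent_natCast_tsub hd j).inv.isBigO
  refine (hnum.mul hden).congr' ?_ (.of_forall fun i => one_mul _)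
  filter_upwards [hd.eventually_gt_atTop j] with i hi
  have hne : ((d i - j : ℕ) : ℝ) ≠ 0 := by exact_mod_cast (Nat.sub_pos_of_lt hi).ne'
  field_simp

theorem isBigO_descFactorial_div_descFactorial_sub_pow (hd : Tendsto d l atTop)
    (hm : (fun i => (m i : ℝ) - c * d i) =O[l] (fun _ => (1 : ℝ))) (k : ℕ) :
    (fun i => ((m i).descFactorial k : ℝ) / (d i).descFactorial k - c ^ k)
      =O[l] (fun i => (d i : ℝ)⁻¹) := by
  induction k with
  | zero => simpa using isBigO_zero _ _
  | succ k ih =>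
    have hfactor := isBigO_tsub_div_tsub_sub hd hm k
    have hinv : (fun i => (d i : ℝ)⁻¹) =O[l] (fun _ => (1 : ℝ)) :=
      (tendsto_inv_atTop_nhds_zero_nat.comp hd).isBigO_one ℝ
    have hbounded : (fun i => ((m i - k : ℕ) : ℝ) / (d i - k : ℕ)) =O[l] (fun _ => (1 : ℝ)) := by
      simpa only [sub_add_cancel] using
        (hfactor.trans hinv).add (isBigO_const_const c one_ne_zero l)
    have hproduct := (hbounded.mul ih).congr_right fun i => one_mul _
    refine (hproduct.add (hfactor.const_mul_left (c ^ k))).congr_left fun i => ?_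
    simp only [Nat.descFactorial_succ, Nat.cast_mul, mul_div_mul_comm]
    ring

theorem choose_div_choose_eq_descFactorial_div {K : Type*} [Field K] [CharZero K] (a b k : ℕ) :
    (a.choose k : K) / b.choose k = a.descFactorial k / b.descFactorial k := by
  simp only [Nat.descFactorial_eq_factorial_mul_choose, Nat.cast_mul]
  exact (mul_div_mul_left _ _ (Nat.cast_ne_zero.2 k.factorial_ne_zero)).symm

theorem isBigO_choose_div_choose_sub_pow (hd : Tendsto d l atTop)
    (hm : (fun i => (m i : ℝ) - c * d i) =O[l] (fun _ => (1 : ℝ))) (k : ℕ) :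
    (fun i => ((m i).choose k : ℝ) / (d i).choose k - c ^ k) =O[l] (fun i => (d i : ℝ)⁻¹) := by
  simpa only [choose_div_choose_eq_descFactorial_div] using
    isBigO_descFactorial_div_descFactorial_sub_pow hd hm k

end ChooseRatio

theorem isBigO_log_natCast : (fun n : ℕ => Real.log n) =O[atTop] (fun n : ℕ => (n : ℝ)) :=
  (Real.isLittleO_log_id_atTop.comp_tendsto tendsto_natCast_atTop_atTop).isBigO

theorem isBigO_log_choose (m : ℕ → ℕ) :
    (fun n : ℕ => Real.log (n.choose (m n))) =O[atTop] (fun n : ℕ => (n : ℝ)) := by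
  refine .of_bound (Real.log 2) (.of_forall fun n => ?_)
  rw [Real.norm_of_nonneg (Real.log_natCast_nonneg _), Real.norm_natCast, mul_comm,
    ← Real.log_pow]
  rcases (n.choose (m n)).eq_zero_or_pos with hzero | hpos
  · rw [hzero, Nat.cast_zero, Real.log_zero]
    exact Real.log_nonneg (one_le_pow₀ one_le_two)
  · exact Real.log_le_log (by exact_mod_cast hpos) (by exact_mod_cast n.choose_le_two_pow (m n))

theorem tendsto_log_rpow_add_sub_mul_log {α : ℝ} (hα : 0 < α) (y : ℝ) :
    Tendsto (fun x : ℝ => Real.log (x ^ α + y) - α * Real.log x) atTop (𝓝 0) := by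
  refine ((Real.tendsto_log_comp_add_sub_log y).comp (tendsto_rpow_atTop hα)).congr' ?_
  filter_upwards [eventually_gt_atTop 0] with x hx
  simp only [Function.comp_apply, Real.log_rpow hx]

theorem isBigO_log_sub_log {ι : Type*} {l : Filter ι} {f : ι → ℝ} {a : ℝ} (ha : a ≠ 0)
    (hf : Tendsto f l (𝓝 a)) :
    (fun i => Real.log (f i) - Real.log a) =O[l] (fun i => f i - a) :=
  (Real.hasDerivAt_log ha).isBigO_sub.comp_tendsto hf

section Distance

variable {α δ : ℝ}

theorem floor_mul_natCast_le (hδ1 : δ ≤ 1) (n : ℕ) : ⌊δ * (n : ℝ)⌋₊ ≤ n :=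
  Nat.floor_le_of_le (mul_le_of_le_one_left n.cast_nonneg hδ1)

theorem isBigO_floor_mul_natCast_sub (hδ0 : 0 ≤ δ) :
    (fun n : ℕ => (⌊δ * (n : ℝ)⌋₊ : ℝ) - δ * n) =O[atTop] (fun _ => (1 : ℝ)) :=
  .of_bound 1 (.of_forall fun n => by
    simpa using Nat.abs_floor_sub_le (mul_nonneg hδ0 n.cast_nonneg))

theorem isBigO_floor_mul_log_rpow_sub_one (hα : 0 < α) (hδ0 : 0 ≤ δ) (hδ1 : δ ≤ 1) :
    (fun n : ℕ => (⌊δ * (n : ℝ)⌋₊ : ℝ) * Real.log ((n : ℝ) ^ α - 1)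
      - α * δ * (n * Real.log n)) =O[atTop] (fun n : ℕ => (n : ℝ)) := by
  have hfloor : (fun n : ℕ => (⌊δ * (n : ℝ)⌋₊ : ℝ)) =O[atTop] (fun n : ℕ => (n : ℝ)) :=
    isBigO_of_le _ fun n => by simpa using floor_mul_natCast_le hδ1 n
  have hlog : (fun n : ℕ => Real.log ((n : ℝ) ^ α - 1) - α * Real.log n)
      =O[atTop] (fun _ => (1 : ℝ)) :=
    ((tendsto_log_rpow_add_sub_mul_log hα (-1)).comp tendsto_natCast_atTop_atTop).isBigO_one ℝ
  exact ((hlog.mul hfloor).add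
    ((isBigO_floor_mul_natCast_sub hδ0).mul (isBigO_log_natCast.const_mul_left α))).congr
      (fun n => by ring) (fun n => one_mul _)

theorem isBigO_B_sub_pow (hδ0 : 0 ≤ δ) (hδ1 : δ ≤ 1) (k : ℕ) :
    (fun n : ℕ => B k δ n - (1 - δ) ^ k) =O[atTop] (fun n : ℕ => (n : ℝ)⁻¹) := by
  refine isBigO_choose_div_choose_sub_pow tendsto_id ?_ k
  refine (isBigO_floor_mul_natCast_sub hδ0).neg_left.congr_left fun n => ?_
  rw [id, Nat.cast_sub (floor_mul_natCast_le hδ1 n)]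
  ring

theorem tendsto_B (hδ0 : 0 ≤ δ) (hδ1 : δ ≤ 1) (k : ℕ) :
    Tendsto (B k δ) atTop (𝓝 ((1 - δ) ^ k)) :=
  tendsto_sub_nhds_zero_iff.1 <|
    (isBigO_B_sub_pow hδ0 hδ1 k).trans_tendsto tendsto_inv_atTop_nhds_zero_nat

theorem tendsto_one_sub_add_mul_B (hδ0 : 0 ≤ δ) (hδ1 : δ ≤ 1) (k : ℕ) (p : ℝ) :
    Tendsto (fun n => 1 - p + p * B k δ n) atTop (𝓝 (1 - p + p * (1 - δ) ^ k)) :=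
  ((tendsto_B hδ0 hδ1 k).const_mul p).const_add (1 - p)

theorem isBigO_mul_log_one_sub_add_mul_B {k : ℕ} {p : ℝ} (hδ0 : 0 ≤ δ) (hδ1 : δ ≤ 1)
    (hlimit : 1 - p + p * (1 - δ) ^ k ≠ 0) :
    (fun n : ℕ => n * Real.log n *
        (Real.log (1 - p + p * B k δ n) - Real.log (1 - p + p * (1 - δ) ^ k)))
      =O[atTop] (fun n : ℕ => (n : ℝ)) := by
  have hdiff : (fun n : ℕ => Real.log (1 - p + p * B k δ n)
      - Real.log (1 - p + p * (1 - δ) ^ k)) =O[atTop] (fun n : ℕ => (n : ℝ)⁻¹) :=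
    (isBigO_log_sub_log hlimit (tendsto_one_sub_add_mul_B hδ0 hδ1 k p)).trans <|
      ((isBigO_B_sub_pow hδ0 hδ1 k).const_mul_left p).congr_left fun n => by ring
  refine (((isBigO_refl (fun n : ℕ => (n : ℝ)) atTop).mul isBigO_log_natCast).mul
    hdiff).congr_right fun n => ?_
  exact mul_self_mul_inv (n : ℝ)

theorem log_F {k n : ℕ} {r p : ℝ} (hδ1 : δ ≤ 1) (hn : 1 < (n : ℝ) ^ α)
    (hsat : 0 < 1 - p + p * B k δ n) :
    Real.log (F k α r p δ n) = Real.log (n.choose ⌊δ * (n : ℝ)⌋₊)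
      + ⌊δ * (n : ℝ)⌋₊ * Real.log ((n : ℝ) ^ α - 1)
      + r * n * Real.log n * Real.log (1 - p + p * B k δ n) := by
  have hchoose : (n.choose ⌊δ * (n : ℝ)⌋₊ : ℝ) ≠ 0 := by
    exact_mod_cast (Nat.choose_pos (floor_mul_natCast_le hδ1 n)).ne'
  have hpow : ((n : ℝ) ^ α - 1) ^ ⌊δ * (n : ℝ)⌋₊ ≠ 0 := pow_ne_zero _ (sub_pos.2 hn).ne'
  have hbracket : B k δ n + (1 - p) * (1 - B k δ n) = 1 - p + p * B k δ n := by ring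
  rw [F, hbracket, Real.log_mul (mul_ne_zero hchoose hpow) (Real.rpow_pos_of_pos hsat _).ne',
    Real.log_mul hchoose hpow, Real.log_pow, Real.log_rpow hsat]

end Distance

theorem rb_forced_distance_asymptotics_general (k : ℕ) {α p δ : ℝ} (r : ℝ) (hα : 0 < α)
    (hδ0 : 0 ≤ δ) (hδ1 : δ ≤ 1) (hlimit : 0 < 1 - p + p * (1 - δ) ^ k) :
    (fun n : ℕ => Real.log (F k α r p δ n)
        - (n : ℝ) * Real.log n * (r * Real.log (1 - p + p * (1 - δ) ^ k) + α * δ))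
      =O[atTop] (fun n : ℕ => (n : ℝ)) := by
  have hsum := ((isBigO_log_choose fun n => ⌊δ * (n : ℝ)⌋₊).add
    (isBigO_floor_mul_log_rpow_sub_one hα hδ0 hδ1)).add
    ((isBigO_mul_log_one_sub_add_mul_B hδ0 hδ1 hlimit.ne').const_mul_left r)
  refine hsum.congr' ?_ .rfl
  have hpow : ∀ᶠ n : ℕ in atTop, 1 < (n : ℝ) ^ α :=
    ((tendsto_rpow_atTop hα).comp tendsto_natCast_atTop_atTop).eventually_gt_atTop 1
  filter_upwards [hpow, (tendsto_one_sub_add_mul_B hδ0 hδ1 k p).eventually_const_lt hlimit]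
    with n hn hsat
  rw [log_F hδ1 hn hsat]
  ring

/-- **Asymptotics of the expected number of solutions at distance `δ` from the forced
solution**: for an integer `k ≥ 2` and reals `α > 0`, `r > 0`, `0 < p < 1`, `δ ∈ (0,1]`,
`ln F(n) = n·ln n·(r·ln(1 - p + p·(1-δ)^k) + α·δ) + O(n)` as `n → ∞`. -/
theorem rb_forced_distance_asymptotics (k : ℕ) (hk : 2 ≤ k) (α r p δ : ℝ)
    (hα : 0 < α) (hr : 0 < r) (hp0 : 0 < p) (hp1 : p < 1) (hδ0 : 0 < δ) (hδ1 : δ ≤ 1) :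
    (fun n : ℕ => Real.log (F k α r p δ n)
        - (n : ℝ) * Real.log n * (r * Real.log (1 - p + p * (1 - δ) ^ k) + α * δ))
      =O[atTop] (fun n : ℕ => (n : ℝ)) := by
  have hpow : 0 ≤ (1 - δ) ^ k := pow_nonneg (sub_nonneg.2 hδ1) k
  exact rb_forced_distance_asymptotics_general k r hα hδ0.le hδ1
    (add_pos_of_pos_of_nonneg (sub_pos.2 hp1) (mul_nonneg hp0.le hpow))
end

section
/- Let k ≥ 2 be an integer and let α > 0, r > 0 and p be reals with 0 < p ≤ (k-1)/k and α + r·ln(1-p) > 0 (i.e., r < r_cr = -α/ln(1-p)). Define f : [0,1] → ℝ by f(δ) = r·ln(1 - p + p·(1-δ)^k) + α·δ. Then f(δ) < f(1) for every δ ∈ [0,1); that is, f attains its maximum on [0,1] uniquely at δ = 1. -/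
/-!
Put `x = 1 - δ`. Since `α + r log (1 - p) > 0`, it suffices that `log (1 - p + p x ^ k)` lies below
its chord `(1 - x) log (1 - p)` on `(0, 1]`. Writing `c = -log (1 - p)`, this amounts to
`x ^ k ≤ (exp (c x) - 1) / (exp c - 1)`, with equality at `x = 1`. The quotient
`(exp (c x) - 1) / x ^ k` is antitone on `(0, 1]` as soon as `c ≤ k (1 - exp (-c))`, because
`1 - exp (-c x) ≥ x (1 - exp (-c))` by convexity of `exp`. The condition on `c` reads
`-log (1 - p) ≤ k p`, that is, at `x = 1` the function is at least as steep as its chord; it follows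
from `p ≤ (k - 1) / k` through `log y ≥ 1 - 1 / y`.
-/

open Real Set

section ExpSubOne

variable {c k x : ℝ}

lemma mul_one_sub_exp_neg_le_one_sub_exp_neg_mul (hx0 : 0 ≤ x) (hx1 : x ≤ 1) :
    x * (1 - exp (-c)) ≤ 1 - exp (-(c * x)) := by
  have hconv := convexOn_exp.2 (mem_univ 0) (mem_univ (-c)) (sub_nonneg.2 hx1) hx0
    (sub_add_cancel 1 x)
  simp only [smul_eq_mul, mul_zero, zero_add, exp_zero, mul_one] at hconv
  rw [show -(c * x) = x * -c by ring]
  linarith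

lemma hasDerivAt_exp_mul_sub_one_mul_rpow_neg (hx : 0 < x) :
    HasDerivAt (fun y ↦ (exp (c * y) - 1) * y ^ (-k))
      (exp (c * x) * x ^ (-k - 1) * (c * x - k * (1 - exp (-(c * x))))) x := by
  have hexp : HasDerivAt (fun y ↦ exp (c * y) - 1) (exp (c * x) * c) x := by
    simpa using (((hasDerivAt_id x).const_mul c).exp).sub_const 1
  have hrpow : HasDerivAt (fun y : ℝ ↦ y ^ (-k)) (-k * x ^ (-k - 1)) x :=
    hasDerivAt_rpow_const (Or.inl hx.ne')
  have hpow : x ^ (-k) = x ^ (-k - 1) * x := by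
    rw [← rpow_add_one hx.ne', sub_add_cancel]
  have hinv : exp (c * x) * exp (-(c * x)) = 1 := by
    rw [← exp_add, add_neg_cancel, exp_zero]
  refine (hexp.mul hrpow).congr_deriv ?_
  rw [hpow]
  linear_combination (-k * x ^ (-k - 1)) * hinv

lemma antitoneOn_exp_mul_sub_one_mul_rpow_neg (hk : 0 ≤ k) (hck : c ≤ k * (1 - exp (-c))) :
    AntitoneOn (fun y ↦ (exp (c * y) - 1) * y ^ (-k)) (Ioc 0 1) := by
  refine antitoneOn_of_hasDerivWithinAt_nonpos (convex_Ioc 0 1)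
    (fun y hy ↦ (hasDerivAt_exp_mul_sub_one_mul_rpow_neg hy.1).continuousAt.continuousWithinAt)
    (fun y hy ↦ (hasDerivAt_exp_mul_sub_one_mul_rpow_neg
      (interior_subset hy).1).hasDerivWithinAt) fun y hy ↦ ?_
  obtain ⟨hy0, hy1⟩ := interior_subset hy
  have hslope : c * y ≤ k * (1 - exp (-(c * y))) := calc
    c * y ≤ k * (1 - exp (-c)) * y := by gcongr
    _ = k * (y * (1 - exp (-c))) := by ring
    _ ≤ k * (1 - exp (-(c * y))) := by
      gcongr
      exact mul_one_sub_exp_neg_le_one_sub_exp_neg_mul hy0.le hy1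
  exact mul_nonpos_of_nonneg_of_nonpos (by positivity) (sub_nonpos.2 hslope)

lemma exp_sub_one_mul_rpow_le_exp_mul_sub_one (hk : 0 ≤ k) (hck : c ≤ k * (1 - exp (-c)))
    (hx0 : 0 < x) (hx1 : x ≤ 1) : (exp c - 1) * x ^ k ≤ exp (c * x) - 1 := by
  have hanti := antitoneOn_exp_mul_sub_one_mul_rpow_neg hk hck ⟨hx0, hx1⟩
    (right_mem_Ioc.2 one_pos) hx1
  simp only [mul_one, one_rpow, rpow_neg hx0.le] at hanti
  rwa [← div_eq_mul_inv, le_div_iff₀ (rpow_pos_of_pos hx0 k)] at hanti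

end ExpSubOne

section LogOneSub

variable {k p x : ℝ}

lemma one_sub_add_mul_rpow_le_one_sub_rpow (hk : 0 ≤ k) (hp : p < 1)
    (hkp : -log (1 - p) ≤ k * p) (hx0 : 0 < x) (hx1 : x ≤ 1) :
    1 - p + p * x ^ k ≤ (1 - p) ^ (1 - x) := by
  have hq : 0 < 1 - p := sub_pos.2 hp
  have hbound : ((1 - p)⁻¹ - 1) * x ^ k ≤ exp (-log (1 - p) * x) - 1 := by
    have := exp_sub_one_mul_rpow_le_exp_mul_sub_one (c := -log (1 - p)) hk
      (by simpa [exp_log hq] using hkp) hx0 hx1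
    rwa [exp_neg, exp_log hq] at this
  calc
    1 - p + p * x ^ k = (1 - p) * (1 + ((1 - p)⁻¹ - 1) * x ^ k) := by
      field_simp
      ring
    _ ≤ (1 - p) * exp (-log (1 - p) * x) := by
      gcongr
      linarith
    _ = (1 - p) ^ (1 - x) := by
      rw [sub_eq_add_neg 1 x, rpow_add hq, rpow_one, rpow_def_of_pos hq, neg_mul_comm]

lemma log_one_sub_add_mul_rpow_le (hk : 0 ≤ k) (hp : p < 1) (hkp : -log (1 - p) ≤ k * p)
    (hx0 : 0 < x) (hx1 : x ≤ 1) :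
    log (1 - p + p * x ^ k) ≤ (1 - x) * log (1 - p) := by
  have hpos : 0 < 1 - p + p * x ^ k := by
    have hpow : x ^ k ≤ 1 := rpow_le_one hx0.le hx1 hk
    calc
      0 < (1 - p) * (1 - x ^ k) + x ^ k :=
        add_pos_of_nonneg_of_pos (mul_nonneg (sub_nonneg.2 hp.le) (sub_nonneg.2 hpow))
          (rpow_pos_of_pos hx0 k)
      _ = 1 - p + p * x ^ k := by ring
  rw [← log_rpow (sub_pos.2 hp)]
  exact log_le_log hpos (one_sub_add_mul_rpow_le_one_sub_rpow hk hp hkp hx0 hx1)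

lemma lt_one_of_le_sub_one_div (hk : 0 < k) (hp : p ≤ (k - 1) / k) : p < 1 :=
  hp.trans_lt ((div_lt_one hk).2 (sub_one_lt k))

lemma neg_log_one_sub_le_mul_of_le_sub_one_div (hk : 0 < k) (hp0 : 0 ≤ p)
    (hp : p ≤ (k - 1) / k) : -log (1 - p) ≤ k * p := by
  have hq : 0 < 1 - p := sub_pos.2 (lt_one_of_le_sub_one_div hk hp)
  have hinv : (1 - p)⁻¹ ≤ k := by
    refine inv_le_of_inv_le₀ hk ?_
    rw [sub_div, div_self hk.ne', one_div] at hp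
    exact le_sub_comm.1 hp
  calc
    -log (1 - p) ≤ (1 - p)⁻¹ - 1 := by linarith [one_sub_inv_le_log_of_pos hq]
    _ = (1 - p)⁻¹ * p := by
      field_simp
      ring
    _ ≤ k * p := by gcongr

end LogOneSub

theorem rb_forced_growth_rate_maximized_at_one_general {k α r p : ℝ} (hk : 0 ≤ k) (hr : 0 ≤ r)
    (hp : p < 1) (hkp : -log (1 - p) ≤ k * p) (hcond : 0 < α + r * log (1 - p))
    {δ : ℝ} (hδ0 : 0 ≤ δ) (hδ1 : δ < 1) :
    r * log (1 - p + p * (1 - δ) ^ k) + α * δ < r * log (1 - p) + α := by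
  have hchord : log (1 - p + p * (1 - δ) ^ k) ≤ δ * log (1 - p) := by
    simpa using log_one_sub_add_mul_rpow_le hk hp hkp (sub_pos.2 hδ1) (sub_le_self 1 hδ0)
  calc
    r * log (1 - p + p * (1 - δ) ^ k) + α * δ ≤ r * (δ * log (1 - p)) + α * δ := by gcongr
    _ = (α + r * log (1 - p)) * δ := by ring
    _ < (α + r * log (1 - p)) * 1 := by gcongr
    _ = r * log (1 - p) + α := by ring

/-- **Solutions of forced RB instances lie far from the forced solution**: let `k ≥ 2`
be an integer and `α > 0`, `r > 0`, `0 < p ≤ (k-1)/k` reals with `α + r·ln(1-p) > 0`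
(i.e. `r < r_cr = -α/ln(1-p)`). Then the exponential growth rate
`f(δ) = r·ln(1 - p + p·(1-δ)^k) + α·δ` of the expected number of solutions at relative
Hamming distance `δ` from the forced solution satisfies `f(δ) < f(1)` for every
`δ ∈ [0,1)`; that is, `f` attains its maximum on `[0,1]` uniquely at `δ = 1`
(note `f(1) = r·ln(1-p) + α`). -/
theorem rb_forced_growth_rate_maximized_at_one (k : ℕ) (hk : 2 ≤ k) (α r p : ℝ)
    (hα : 0 < α) (hr : 0 < r) (hp0 : 0 < p) (hp1 : p ≤ ((k : ℝ) - 1) / k)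
    (hcond : 0 < α + r * Real.log (1 - p)) :
    ∀ δ : ℝ, 0 ≤ δ → δ < 1 →
      r * Real.log (1 - p + p * (1 - δ) ^ k) + α * δ < r * Real.log (1 - p) + α := by
  intro δ hδ0 hδ1
  have hk_pos : (0 : ℝ) < k := Nat.cast_pos.2 (two_pos.trans_le hk)
  simpa only [rpow_natCast] using rb_forced_growth_rate_maximized_at_one_general hk_pos.le hr.le
    (lt_one_of_le_sub_one_div hk_pos hp1)
    (neg_log_one_sub_le_mul_of_le_sub_one_div hk_pos hp0.le hp1) hcond hδ0 hδ1
end
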